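/- arXiv:0709.2638 — 3 statements merged into one kernel-verified Lean document; each statement's English description precedes it below -/
import Mathlib

section
/- Let u be a non-degenerate 3iet word with parameters ε, l, c, where ε is a Sturm number with ε′ < 0, and c = p₁ + q₁ε, l = p₂ + q₂ε for some rationals p₁, q₁, p₂, q₂ (and l ∉ ℤ[ε]). Then u is a fixed point of some primitive substitution over {1,2,3} if and only if there exists Λ = p + qε (p, q ∈ ℚ) with conjugate Λ′ = p + qε′ such that Λ > 1, Λ′ ∈ (0,1), Λ·Λ′ ∈ {1, −1}, Λ + Λ′ ∈ ℤ, and: (C1) Λ·ℤ[ε] = ℤ[ε]; (C2) with J := [Λ′c, Λ′(c+l)), both points c+ε and c+l−(1−ε) possess an ancestor in J, and these ancestors belong to the set {Λ′c, Λ′(c+ε), Λ′(c+l−(1−ε))}. -/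
/-- The set `ℤ[ε] = {a + bε : a, b ∈ ℤ}`. -/
def Zbr (ε : ℝ) : Set ℝ := {x | ∃ a b : ℤ, x = (a : ℝ) + (b : ℝ) * ε}

/-- The exchange of three intervals on `[c, c+l)` with parameters `ε, l, c`. -/
noncomputable def T3 (ε l c : ℝ) (x : ℝ) : ℝ :=
  if x < c + l - 1 + ε then x + 1 - ε
  else if x < c + ε then x + 1 - 2 * ε
  else x - ε

/-- The letter (1, 2 or 3, coded as 0, 1, 2 in `Fin 3`) coding the position of `x`. -/
noncomputable def letter3 (ε l c : ℝ) (x : ℝ) : Fin 3 :=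
  if x < c + l - 1 + ε then 0 else if x < c + ε then 1 else 2

/-- `u : ℤ → Fin 3` is the 3iet word with parameters `ε, l, c`, coding the orbit of `0`. -/
def IsThreeIetWord (ε l c : ℝ) (u : ℤ → Fin 3) : Prop :=
  ∃ t : ℤ → ℝ, t 0 = 0 ∧ (∀ n, t n ∈ Set.Ico c (c + l)) ∧
    (∀ n, t (n + 1) = T3 ε l c (t n)) ∧ ∀ n, u n = letter3 ε l c (t n)

/-- The extension of a substitution `φ` to finite words, by concatenation. -/
def substWord {A : Type*} (φ : A → List A) (w : List A) : List A := w.flatMap φ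

/-- A substitution is primitive if some power of it maps every letter to a word
containing all letters. -/
def IsPrimitiveSubst {A : Type*} (φ : A → List A) : Prop :=
  ∃ n : ℕ, 1 ≤ n ∧ ∀ a b : A, b ∈ (substWord φ)^[n] [a]

/-- A pointed bidirectional word `u : ℤ → A` is a fixed point of the substitution `φ`. -/
def IsFixedPointSubstZ {A : Type*} (φ : A → List A) (u : ℤ → A) : Prop :=
  ∃ k : ℤ → ℤ, StrictMono k ∧ k 0 = 0 ∧
    (∀ n, k (n + 1) = k n + (φ (u n)).length) ∧
    ∀ n : ℤ, ∀ i : ℕ, (h : i < (φ (u n)).length) → u (k n + i) = (φ (u n)).get ⟨i, h⟩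

/-- `z` is the ancestor of `y` in the interval `J`, for the 3iet `T3 ε l c`:
`z ∈ J`, some iterate of `z` equals `y`, and no intermediate positive iterate
up to that one lies in `J`. -/
def IsAncestor (ε l c : ℝ) (J : Set ℝ) (y z : ℝ) : Prop :=
  z ∈ J ∧ ∃ k : ℕ, (T3 ε l c)^[k] z = y ∧
    ∀ j : ℕ, 1 ≤ j → j ≤ k → (T3 ε l c)^[j] z ∉ J

/-!
Encode `ℤ[ε]` by `ℤ²`, so that `p = (a, b)` has the two values `a + bε` and `a + bε'`. The
trajectory of `0` lifts to `τ : ℤ → ℤ²`. As `ε' < 0`, it visits exactly the points `p` whose value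
at `ε` lies in `[c, c + l)`, in the order of their values at `ε'`.

If `u` is fixed by `φ`, cut at `k : ℤ → ℤ`, then `φ a` displaces `τ` by a vector `Φ a`, and the sums
of these vectors along `u` have bounded values at `ε`. Since `l ∉ ℤ[ε]`, a cocycle with bounded
sums is a multiple of the displacement of the trajectory itself, so `τ ∘ k = f ∘ τ` for an additive
`f` which is multiplication by some `μ` at `ε` and by its conjugate `Λ` at `ε'`.
Boundedness of the trajectory gives `|μ| < 1`, growth of the words gives `Λ > 1`, and replacing `φ`
by its square makes `μ` positive. Then `φ` codes returns of `T` to `μ [c, c + l)`, which form a copy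
of `T` scaled by `μ`. On the way back from `μ x` the orbit can meet a discontinuity of `T` only if
`x` is the left endpoint of an exchanged interval, which gives (C2). Applied to orbits in every
class of `ℤ[ε]` modulo the image of `f`, this together with `l ∉ ℤ[ε]` forces `f` to be surjective,
which is (C1).

Conversely, under (C1) and (C2) the orbit of `μ x` is coded, until it returns to `μ (T x)`, by a
word that depends only on the letter of `x`, because a discontinuity separating two such orbits
would have an ancestor separating the letters. These words form the substitution.
-/

namespace ThreeIet

open Set Filter Topology MeasureTheory

section Evaluation

/-- The value `a + b x` of the pair `(a, b)`: the elements `a + b ε` of `ℤ[ε]` are encoded by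
pairs of integers, and conjugation becomes evaluation at `ε'` in place of `ε`. -/
def evalAt (x : ℝ) : ℤ × ℤ →+ ℝ where
  toFun p := p.1 + p.2 * x
  map_zero' := by simp
  map_add' p q := by push_cast [Prod.fst_add, Prod.snd_add]; ring

variable {x y : ℝ}

lemma evalAt_apply (x : ℝ) (p : ℤ × ℤ) : evalAt x p = p.1 + p.2 * x := rfl

lemma evalAt_nsmul (x : ℝ) (n : ℕ) (p : ℤ × ℤ) : evalAt x (n • p) = n * evalAt x p := by
  rw [map_nsmul, nsmul_eq_mul]

lemma Zbr_eq_range_evalAt (x : ℝ) : Zbr x = Set.range (evalAt x) := by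
  ext z
  simp [Zbr, evalAt_apply, eq_comm]

lemma eq_zero_of_ratCast_add_mul_eq_zero (hx : Irrational x) {a b : ℚ}
    (h : (a : ℝ) + b * x = 0) : a = 0 ∧ b = 0 := by
  have hb : b = 0 := by
    by_contra hb
    exact ((hx.ratCast_mul hb).ratCast_add a).ne_zero h
  exact ⟨by simpa [hb] using h, hb⟩

lemma evalAt_injective (hx : Irrational x) : Function.Injective (evalAt x) := by
  refine (injective_iff_map_eq_zero _).2 fun p hp ↦ ?_
  have h := eq_zero_of_ratCast_add_mul_eq_zero hx (a := p.1) (b := p.2)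
    (by simpa [evalAt_apply] using hp)
  exact Prod.ext (by exact_mod_cast h.1) (by exact_mod_cast h.2)

lemma denseRange_evalAt (hx : Irrational x) : DenseRange (evalAt x) := by
  have hdense : Dense (AddSubgroup.closure {x, 1} : Set ℝ) :=
    dense_addSubgroupClosure_pair_iff.2 (by simpa using hx)
  have hle : AddSubgroup.closure {x, 1} ≤ (evalAt x).range := by
    rw [AddSubgroup.closure_le]
    rintro _ (rfl | rfl)
    · exact ⟨(0, 1), by simp [evalAt_apply]⟩
    · exact ⟨(1, 0), by simp [evalAt_apply]⟩
  exact hdense.mono hle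

lemma exists_evalAt_near (hxy : y ≠ x) (a b : ℝ) :
    ∃ p, |evalAt x p - a| ≤ 1 + |x| ∧ |evalAt y p - b| ≤ 1 + |y| := by
  set v := (b - a) / (y - x)
  set u := a - v * x
  have hv : v * (y - x) = b - a := div_mul_cancel₀ _ (sub_ne_zero.2 hxy)
  have key (z : ℝ) : |evalAt z (⌊u⌋, ⌊v⌋) - (u + v * z)| ≤ 1 + |z| := calc
    _ = |Int.fract u + Int.fract v * z| := by
      rw [abs_sub_comm, evalAt_apply, ← Int.self_sub_floor, ← Int.self_sub_floor]
      congr 1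
      ring
    _ ≤ |Int.fract u| + |Int.fract v| * |z| := (abs_add_le _ _).trans_eq (by rw [abs_mul])
    _ ≤ 1 + 1 * |z| := by
      gcongr <;> rw [Int.abs_fract] <;> exact (Int.fract_lt_one _).le
    _ = 1 + |z| := by rw [one_mul]
  refine ⟨(⌊u⌋, ⌊v⌋), ?_, ?_⟩
  · simpa [u] using key x
  · have hb : u + v * y = b := by linear_combination hv
    exact hb ▸ key y

-- Multiplying a good rational approximation of `x` by `M` keeps it small at `x`, while its value
-- at `y` is about `M (y - x)`.
lemma exists_abs_evalAt_lt_and_lt_evalAt (hxy : y ≠ x) {η : ℝ} (hη : 0 < η) (R : ℝ) :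
    ∃ g, |evalAt x g| < η ∧ R < evalAt y g := by
  suffices h : ∃ g, |evalAt x g| < η ∧ R < |evalAt y g| by
    obtain ⟨g, hgx, hgy⟩ := h
    rcases abs_choice (evalAt y g) with hg | hg
    · exact ⟨g, hgx, hg ▸ hgy⟩
    · exact ⟨-g, by rwa [map_neg, abs_neg], by rwa [map_neg, ← hg]⟩
  have hd : 0 < |y - x| := abs_pos.2 (sub_ne_zero.2 hxy)
  obtain ⟨M, hM⟩ := exists_nat_gt ((R + η) / |y - x|)
  rw [div_lt_iff₀ hd] at hM
  obtain ⟨n, hn⟩ := exists_nat_gt ((M : ℝ) / η)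
  obtain ⟨j, k, hk, -, hjk⟩ := Real.exists_int_int_abs_mul_sub_le x n.succ_pos
  have hk1 : (1 : ℝ) ≤ k := by exact_mod_cast hk
  have hsmall : |evalAt x (M • (-j, k))| < η := by
    have hMn : (M : ℝ) * (1 / (n.succ + 1)) < η := by
      rw [div_lt_iff₀ hη] at hn
      rw [mul_one_div, div_lt_iff₀ (by positivity)]
      push_cast
      nlinarith
    have heq : evalAt x (M • (-j, k)) = M * (k * x - j) := by
      rw [evalAt_nsmul, evalAt_apply]; push_cast; ring
    rw [heq, abs_mul, Nat.abs_cast]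
    exact (mul_le_mul_of_nonneg_left hjk M.cast_nonneg).trans_lt hMn
  refine ⟨M • (-j, k), hsmall, ?_⟩
  have hdiff : |evalAt y (M • (-j, k)) - evalAt x (M • (-j, k))| = M * (k * |y - x|) := by
    have : evalAt y (M • (-j, k)) - evalAt x (M • (-j, k)) = M * (k * (y - x)) := by
      rw [evalAt_nsmul, evalAt_nsmul, evalAt_apply, evalAt_apply]; ring
    rw [this, abs_mul, abs_mul, Nat.abs_cast, abs_of_nonneg (zero_le_one.trans hk1)]
  have hbig : M * |y - x| ≤ M * (k * |y - x|) := by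
    gcongr
    exact le_mul_of_one_le_left hd.le hk1
  linarith [abs_sub (evalAt y (M • (-j, k))) (evalAt x (M • (-j, k)))]

lemma exists_evalAt_mem_Ioo_and_lt_evalAt (hx : Irrational x) (hxy : y ≠ x) {α β : ℝ}
    (hαβ : α < β) (R : ℝ) : ∃ p, evalAt x p ∈ Ioo α β ∧ R < evalAt y p := by
  obtain ⟨q, hqα, hqβ⟩ := (denseRange_evalAt hx).exists_mem_open isOpen_Ioo
    (Set.nonempty_Ioo.2 hαβ)
  obtain ⟨g, hgx, hgy⟩ := exists_abs_evalAt_lt_and_lt_evalAt hxy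
    (lt_min (sub_pos.2 hqα) (sub_pos.2 hqβ)) (R - evalAt y q)
  obtain ⟨hgα, hgβ⟩ := lt_min_iff.1 hgx
  refine ⟨q + g, ⟨?_, ?_⟩, ?_⟩ <;> rw [map_add]
  · linarith [(abs_lt.1 hgα).1]
  · linarith [(abs_lt.1 hgβ).2]
  · linarith

lemma exists_evalAt_mem_Ioo_and_evalAt_lt (hx : Irrational x) (hxy : y ≠ x) {α β : ℝ}
    (hαβ : α < β) (R : ℝ) : ∃ p, evalAt x p ∈ Ioo α β ∧ evalAt y p < R := by
  obtain ⟨p, ⟨hα, hβ⟩, hR⟩ :=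
    exists_evalAt_mem_Ioo_and_lt_evalAt hx hxy (neg_lt_neg hαβ) (-R)
  refine ⟨-p, ⟨?_, ?_⟩, ?_⟩ <;> rw [map_neg] <;> linarith

lemma exists_evalAt_add_nsmul_mem_Ioo_and_lt_evalAt (hx : Irrational x) (hxy : y ≠ x) {D : ℕ}
    (hD : 0 < D) (s : ℤ × ℤ) {α β : ℝ} (hαβ : α < β) (R : ℝ) :
    ∃ q, evalAt x (s + D • q) ∈ Ioo α β ∧ R < evalAt y (s + D • q) := by
  have hD' : (0 : ℝ) < D := by exact_mod_cast hD
  obtain ⟨q, ⟨hα, hβ⟩, hR⟩ := exists_evalAt_mem_Ioo_and_lt_evalAt hx hxy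
    (α := (α - evalAt x s) / D) (β := (β - evalAt x s) / D) (by gcongr)
    ((R - evalAt y s) / D)
  rw [div_lt_iff₀ hD'] at hα hR
  rw [lt_div_iff₀ hD'] at hβ
  refine ⟨q, ⟨?_, ?_⟩, ?_⟩ <;> rw [map_add, evalAt_nsmul] <;> linarith

end Evaluation

section Exchange

/-- The translations of the three letters: `T3` acts on the interval coded by `a` as translation by
`evalAt ε (step a)`. -/
def step : Fin 3 → ℤ × ℤ := ![(1, -1), (1, -2), (0, -1)]

/-- The condition `max(ε, 1 - ε) < l < 1` under which the three exchanged intervals are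
nonempty. -/
structure IsNondegenerate (ε l : ℝ) : Prop where
  lt : ε < l
  one_sub_lt : 1 - ε < l
  lt_one : l < 1

/-- Nondegenerate parameters together with a negative `ε'` playing the role of the conjugate of the
irrational slope `ε`; that `ε` is quadratic is not part of the notion. -/
structure IsSturmExchange (ε ε' l : ℝ) : Prop extends IsNondegenerate ε l where
  irrational' : Irrational ε'
  neg : ε' < 0
  irrational : Irrational ε

/-- The vector `v ∈ ℤ²` by which the first `j` steps of the orbit of `x` displace it, that is
`T^j x = x + evalAt ε v`. -/
noncomputable def displacement (ε l c : ℝ) (j : ℕ) (x : ℝ) : ℤ × ℤ :=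
  birkhoffSum (T3 ε l c) (fun y ↦ step (letter3 ε l c y)) j x

variable {ε ε' l c x y z : ℝ} {j : ℕ}

namespace IsNondegenerate

lemma mem_Ioo (h : IsNondegenerate ε l) : ε ∈ Ioo 0 1 :=
  ⟨by linarith [h.one_sub_lt, h.lt_one], h.lt.trans h.lt_one⟩

lemma mapsTo_T3 (h : IsNondegenerate ε l) (c : ℝ) :
    MapsTo (T3 ε l c) (Ico c (c + l)) (Ico c (c + l)) := by
  rintro x ⟨hcx, hxl⟩
  obtain ⟨hl, hl', hl1⟩ := h
  unfold T3
  split_ifs <;> constructor <;> linarith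

lemma injOn_T3 (h : IsNondegenerate ε l) (c : ℝ) : InjOn (T3 ε l c) (Ico c (c + l)) := by
  rintro x ⟨hcx, hxl⟩ y ⟨hcy, hyl⟩ hxy
  have hl1 := h.lt_one
  unfold T3 at hxy
  split_ifs at hxy <;> linarith

lemma iterate_T3_mem (h : IsNondegenerate ε l) (hx : x ∈ Ico c (c + l)) (j : ℕ) :
    (T3 ε l c)^[j] x ∈ Ico c (c + l) :=
  (h.mapsTo_T3 c).iterate j hx

lemma injOn_iterate_T3 (h : IsNondegenerate ε l) (c : ℝ) (j : ℕ) :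
    InjOn (T3 ε l c)^[j] (Ico c (c + l)) :=
  (h.injOn_T3 c).iterate (h.mapsTo_T3 c) j

end IsNondegenerate

lemma IsSturmExchange.ne (h : IsSturmExchange ε ε' l) : ε' ≠ ε :=
  (h.neg.trans h.mem_Ioo.1).ne

lemma T3_eq_add_evalAt_step (ε l c x : ℝ) :
    T3 ε l c x = x + evalAt ε (step (letter3 ε l c x)) := by
  unfold T3 letter3
  split_ifs <;> simp [evalAt_apply, step] <;> ring

lemma displacement_zero (ε l c x : ℝ) : displacement ε l c 0 x = 0 := birkhoffSum_zero ..

lemma displacement_succ (ε l c : ℝ) (j : ℕ) (x : ℝ) :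
    displacement ε l c (j + 1) x =
      displacement ε l c j x + step (letter3 ε l c ((T3 ε l c)^[j] x)) :=
  birkhoffSum_succ ..

lemma iterate_T3_eq_add_displacement (ε l c : ℝ) (j : ℕ) (x : ℝ) :
    (T3 ε l c)^[j] x = x + evalAt ε (displacement ε l c j x) := by
  induction j with
  | zero => simp [displacement_zero]
  | succ j ih =>
    rw [Function.iterate_succ_apply', T3_eq_add_evalAt_step, displacement_succ, map_add,
      ← add_assoc, ← ih]

lemma displacement_congr
    (h : ∀ i < j, letter3 ε l c ((T3 ε l c)^[i] x) = letter3 ε l c ((T3 ε l c)^[i] y)) :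
    displacement ε l c j x = displacement ε l c j y :=
  Finset.sum_congr rfl fun i hi ↦ congrArg step (h i (Finset.mem_range.1 hi))

lemma neg_le_evalAt_step (hε' : ε' < 0) (a : Fin 3) : -ε' ≤ evalAt ε' (step a) := by
  fin_cases a
  · simp [evalAt_apply, step]
  · simpa [evalAt_apply, step] using (by linarith : -ε' ≤ 1 + -(2 * ε'))
  · simp [evalAt_apply, step]

lemma evalAt_step_pos (hε' : ε' < 0) (a : Fin 3) : 0 < evalAt ε' (step a) :=
  (neg_pos.2 hε').trans_le (neg_le_evalAt_step hε' a)

lemma strictMono_evalAt_displacement (hε' : ε' < 0) (ε l c x : ℝ) :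
    StrictMono fun j ↦ evalAt ε' (displacement ε l c j x) :=
  strictMono_nat_of_lt_succ fun j ↦ by
    rw [displacement_succ, map_add]
    exact lt_add_of_pos_right _ (evalAt_step_pos hε' _)

lemma mul_neg_le_evalAt_displacement (hε' : ε' < 0) (ε l c : ℝ) (j : ℕ) (x : ℝ) :
    j * -ε' ≤ evalAt ε' (displacement ε l c j x) := by
  induction j with
  | zero => simp [displacement_zero]
  | succ j ih =>
    rw [displacement_succ, map_add, Nat.cast_succ, add_one_mul]
    exact add_le_add ih (neg_le_evalAt_step hε' _)

lemma fst_nonneg_and_snd_neg (hε : ε ∈ Ioo 0 1) (hε' : ε' < 0) {p : ℤ × ℤ}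
    (hp : 0 < evalAt ε' p) (hsmall : |evalAt ε p| < 1) : 0 ≤ p.1 ∧ p.2 < 0 := by
  obtain ⟨hε0, hε1⟩ := hε
  obtain ⟨hlt, hlt'⟩ := abs_lt.1 hsmall
  rw [evalAt_apply] at hp hlt hlt'
  have hsnd : p.2 < 0 := by
    by_contra! hb
    have hb' : (0 : ℝ) ≤ p.2 := by exact_mod_cast hb
    have ha : (0 : ℝ) < p.1 := by nlinarith
    have ha1 : (1 : ℝ) ≤ p.1 := by exact_mod_cast (show 0 < p.1 by exact_mod_cast ha)
    nlinarith
  have hsnd' : (p.2 : ℝ) < 0 := by exact_mod_cast hsnd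
  have hfst : (-1 : ℝ) < p.1 := by nlinarith
  exact ⟨Int.lt_add_one_iff.1 (by exact_mod_cast (by linarith : (0 : ℝ) < p.1 + 1)), hsnd⟩

-- `T` moves `x` to the point of `x + ℤ[ε]` in the interval whose conjugate comes next.
lemma evalAt_step_le_of_add_mem (h : IsNondegenerate ε l) (hε' : ε' < 0)
    (hx : x ∈ Ico c (c + l)) {p : ℤ × ℤ} (hp : 0 < evalAt ε' p)
    (hxp : x + evalAt ε p ∈ Ico c (c + l)) :
    evalAt ε' (step (letter3 ε l c x)) ≤ evalAt ε' p := by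
  have hsmall : |evalAt ε p| < 1 := by
    rw [abs_lt]
    constructor <;> linarith [hx.1, hx.2, hxp.1, hxp.2, h.lt_one]
  obtain ⟨ha, hb⟩ := fst_nonneg_and_snd_neg h.mem_Ioo hε' hp hsmall
  have hε0 := h.mem_Ioo.1
  obtain ⟨a, b⟩ := p
  obtain ⟨hcx, hxl⟩ := hxp
  have hb1 : (b : ℝ) ≤ -1 := by exact_mod_cast Int.le_sub_one_of_lt hb
  have ha0 : (0 : ℝ) ≤ a := by exact_mod_cast ha
  have ha1 (hlt : x < c + ε) : (1 : ℝ) ≤ a := by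
    have hne : a ≠ 0 := by
      rintro rfl
      simp only [evalAt_apply, Int.cast_zero, zero_add] at hcx
      nlinarith
    exact_mod_cast (show 1 ≤ a by omega)
  simp only [evalAt_apply] at hcx hxl ⊢
  unfold letter3
  split_ifs with h0 h1
  · have := ha1 (by linarith [h.lt_one])
    simp only [step, Matrix.cons_val_zero, Int.cast_one, Int.cast_neg]
    nlinarith
  · have hb2 : b ≠ -1 := by
      rintro rfl
      push_cast at hxl
      linarith [ha1 h1]
    have : (b : ℝ) ≤ -2 := by exact_mod_cast (show b ≤ -2 by omega)
    have := ha1 h1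
    simp only [step, Matrix.cons_val_one, Matrix.cons_val_zero, Int.cast_one, Int.cast_neg,
      Int.cast_ofNat]
    nlinarith
  · simp only [step, Matrix.cons_val, Int.cast_zero, Int.cast_neg, Int.cast_one]
    nlinarith

-- The orbit of `x` visits the points of `x + ℤ[ε]` in `[c, c + l)` in the order of their
-- conjugates.
lemma IsSturmExchange.exists_displacement_eq (h : IsSturmExchange ε ε' l)
    (hx : x ∈ Ico c (c + l)) {p : ℤ × ℤ} (hp : 0 ≤ evalAt ε' p)
    (hxp : x + evalAt ε p ∈ Ico c (c + l)) : ∃ j, displacement ε l c j x = p := by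
  have hunbounded : ∃ j, evalAt ε' p < evalAt ε' (displacement ε l c j x) := by
    obtain ⟨n, hn⟩ := exists_nat_gt (evalAt ε' p / -ε')
    rw [div_lt_iff₀ (neg_pos.2 h.neg)] at hn
    exact ⟨n, hn.trans_le (mul_neg_le_evalAt_displacement h.neg ε l c n x)⟩
  obtain ⟨j, hj, hj'⟩ := Nat.exists_not_and_succ_of_not_zero_of_exists
    (by simpa [displacement_zero] using hp) hunbounded
  refine ⟨j, evalAt_injective h.irrational' ((not_lt.1 hj).eq_of_not_lt fun hlt ↦ ?_)⟩
  have hle := evalAt_step_le_of_add_mem h.toIsNondegenerate h.neg (h.iterate_T3_mem hx j)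
    (p := p - displacement ε l c j x) (by rwa [map_sub, sub_pos])
    (by rwa [iterate_T3_eq_add_displacement, map_sub, add_add_sub_cancel])
  rw [displacement_succ, map_add] at hj'
  rw [map_sub] at hle
  linarith

end Exchange

section Itineraries

variable {ε l c x y z : ℝ} {j : ℕ}

lemma monotone_letter3 (hl : l < 1) (ε c : ℝ) : Monotone (letter3 ε l c) := by
  intro x y hxy
  unfold letter3
  split_ifs <;> first | decide | (exfalso; linarith)

lemma eventually_nhdsGE_letter3_eq (ε l c x : ℝ) :
    ∀ᶠ y in 𝓝[≥] x, letter3 ε l c y = letter3 ε l c x := by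
  have key (d : ℝ) : ∀ᶠ y in 𝓝[≥] x, (y < d ↔ x < d) := by
    by_cases hd : x < d
    · filter_upwards [mem_nhdsWithin_of_mem_nhds (Iio_mem_nhds hd)] with y hy
      exact iff_of_true hy hd
    · filter_upwards [self_mem_nhdsWithin] with y hy
      exact iff_of_false (fun hyd ↦ hd (lt_of_le_of_lt hy hyd)) hd
  filter_upwards [key (c + l - 1 + ε), key (c + ε)] with y h0 h1
  simp only [letter3, h0, h1]

lemma tendsto_T3_nhdsGE (ε l c x : ℝ) : Tendsto (T3 ε l c) (𝓝[≥] x) (𝓝[≥] T3 ε l c x) := by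
  rw [T3_eq_add_evalAt_step ε l c x]
  have htranslate : Tendsto (· + evalAt ε (step (letter3 ε l c x))) (𝓝[≥] x)
      (𝓝[≥] (x + evalAt ε (step (letter3 ε l c x)))) :=
    (continuous_add_const _).continuousWithinAt.tendsto_nhdsWithin fun y hy ↦
      mem_Ici.2 (add_le_add_left (mem_Ici.1 hy) _)
  refine htranslate.congr' ?_
  filter_upwards [eventually_nhdsGE_letter3_eq ε l c x] with y hy
  rw [T3_eq_add_evalAt_step, hy]

lemma tendsto_iterate_T3_nhdsGE (ε l c : ℝ) (j : ℕ) (x : ℝ) :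
    Tendsto (T3 ε l c)^[j] (𝓝[≥] x) (𝓝[≥] (T3 ε l c)^[j] x) := by
  induction j with
  | zero => exact tendsto_id
  | succ j ih =>
    rw [Function.iterate_succ', Function.comp_apply]
    exact (tendsto_T3_nhdsGE ε l c _).comp ih

lemma eventually_nhdsGE_itinerary_eq (ε l c : ℝ) (j : ℕ) (x : ℝ) :
    ∀ᶠ y in 𝓝[≥] x, ∀ i < j,
      letter3 ε l c ((T3 ε l c)^[i] y) = letter3 ε l c ((T3 ε l c)^[i] x) :=
  (finite_lt_nat j).eventually_all.2 fun i _ ↦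
    (tendsto_iterate_T3_nhdsGE ε l c i x).eventually (eventually_nhdsGE_letter3_eq ε l c _)

end Itineraries

section Lifts

/-- `τ` lifts to `ℤ²` the trajectory of `0` coded by `u`: the trajectory itself is
`n ↦ evalAt ε (τ n)`. -/
structure IsLift (ε l c : ℝ) (u : ℤ → Fin 3) (τ : ℤ → ℤ × ℤ) : Prop where
  zero : τ 0 = 0
  mem (n : ℤ) : evalAt ε (τ n) ∈ Ico c (c + l)
  letter (n : ℤ) : u n = letter3 ε l c (evalAt ε (τ n))
  succ (n : ℤ) : τ (n + 1) = τ n + step (u n)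

variable {ε ε' l c x : ℝ} {u : ℤ → Fin 3} {τ : ℤ → ℤ × ℤ}

lemma exists_isLift (hε : Irrational ε) (hu : IsThreeIetWord ε l c u) :
    ∃ τ, IsLift ε l c u τ := by
  obtain ⟨t, h0, hmem, hsucc, hletter⟩ := hu
  have hex (n : ℤ) : ∃ p, evalAt ε p = t n := by
    induction n using Int.induction_on with
    | zero => exact ⟨0, by rw [h0, map_zero]⟩
    | succ i ih =>
      obtain ⟨p, hp⟩ := ih
      exact ⟨p + step (letter3 ε l c (t i)), by rw [hsucc, T3_eq_add_evalAt_step, map_add, hp]⟩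
    | pred i ih =>
      obtain ⟨p, hp⟩ := ih
      refine ⟨p - step (letter3 ε l c (t (-i - 1))), ?_⟩
      rw [map_sub, hp, sub_eq_iff_eq_add, ← T3_eq_add_evalAt_step, ← hsucc, sub_add_cancel]
  choose τ hτ using hex
  refine ⟨τ, evalAt_injective hε (by rw [hτ, h0, map_zero]), fun n ↦ hτ n ▸ hmem n,
    fun n ↦ by rw [hletter, hτ], fun n ↦ evalAt_injective hε ?_⟩
  rw [map_add, hτ, hτ, hsucc, T3_eq_add_evalAt_step, hletter]

namespace IsLift

lemma apply_add_natCast (hτ : IsLift ε l c u τ) (n : ℤ) (j : ℕ) :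
    τ (n + j) = τ n + displacement ε l c j (evalAt ε (τ n)) := by
  induction j with
  | zero => simp [displacement_zero]
  | succ j ih =>
    rw [Nat.cast_succ, ← add_assoc, hτ.succ, hτ.letter, displacement_succ,
      iterate_T3_eq_add_displacement, ← map_add, ← ih, ← add_assoc, ← ih]

lemma iterate_T3 (hτ : IsLift ε l c u τ) (n : ℤ) (j : ℕ) :
    (T3 ε l c)^[j] (evalAt ε (τ n)) = evalAt ε (τ (n + j)) := by
  rw [iterate_T3_eq_add_displacement, ← map_add, hτ.apply_add_natCast]

lemma letter_add_natCast (hτ : IsLift ε l c u τ) (n : ℤ) (j : ℕ) :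
    u (n + j) = letter3 ε l c ((T3 ε l c)^[j] (evalAt ε (τ n))) := by
  rw [hτ.letter, hτ.iterate_T3]

lemma strictMono (hτ : IsLift ε l c u τ) (hε' : ε' < 0) :
    StrictMono fun n ↦ evalAt ε' (τ n) :=
  strictMono_int_of_lt_succ fun n ↦ by
    rw [hτ.succ, map_add]
    exact lt_add_of_pos_right _ (evalAt_step_pos hε' _)

lemma injective (hτ : IsLift ε l c u τ) (hε' : ε' < 0) : Function.Injective τ :=
  Function.Injective.of_comp (f := evalAt ε') (hτ.strictMono hε').injective

lemma zero_mem (hτ : IsLift ε l c u τ) : 0 ∈ Ico c (c + l) := by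
  simpa [hτ.zero] using hτ.mem 0

lemma exists_apply_eq (hτ : IsLift ε l c u τ) (h : IsSturmExchange ε ε' l) {p : ℤ × ℤ}
    (hp : evalAt ε p ∈ Ico c (c + l)) : ∃ n, τ n = p := by
  rcases le_total 0 (evalAt ε' p) with hpos | hneg
  · obtain ⟨j, hj⟩ := h.exists_displacement_eq hτ.zero_mem hpos (by rwa [zero_add])
    refine ⟨j, ?_⟩
    rw [← zero_add (j : ℤ), hτ.apply_add_natCast, hτ.zero, map_zero, hj, zero_add]
  · obtain ⟨j, hj⟩ := h.exists_displacement_eq hp (p := -p) (by rwa [map_neg, neg_nonneg])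
      (by simpa using hτ.zero_mem)
    refine ⟨-j, evalAt_injective h.irrational (h.injOn_iterate_T3 c j (hτ.mem _) hp ?_)⟩
    rw [hτ.iterate_T3, iterate_T3_eq_add_displacement, hj, neg_add_cancel, hτ.zero, map_neg,
      add_neg_cancel, map_zero]

lemma exists_apply_eq_of_pos (hτ : IsLift ε l c u τ) (h : IsSturmExchange ε ε' l) {p : ℤ × ℤ}
    (hp : evalAt ε p ∈ Ico c (c + l)) (hpos : 0 ≤ evalAt ε' p) : ∃ n : ℕ, τ n = p := by
  obtain ⟨n, hn⟩ := hτ.exists_apply_eq h hp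
  have hn0 : 0 ≤ n := by
    rw [← (hτ.strictMono h.neg).le_iff_le]
    simpa [hτ.zero, hn] using hpos
  exact ⟨n.toNat, by rwa [Int.toNat_of_nonneg hn0]⟩

-- The trajectory is right-dense, even along a class modulo `D`.
lemma exists_of_eventually_nhdsGE (hτ : IsLift ε l c u τ) (h : IsSturmExchange ε ε' l)
    (hx : x ∈ Ico c (c + l)) {P : ℝ → Prop} (hP : ∀ᶠ y in 𝓝[≥] x, P y) {D : ℕ} (hD : 0 < D)
    (s : ℤ × ℤ) : ∃ (n : ℕ) (q : ℤ × ℤ), P (evalAt ε (τ n)) ∧ τ n = s + D • q := by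
  obtain ⟨β, hβ, hsub⟩ := mem_nhdsGE_iff_exists_Ico_subset.1 (inter_mem (Ico_mem_nhdsGE hx.2) hP)
  obtain ⟨q, hq, hpos⟩ :=
    exists_evalAt_add_nsmul_mem_Ioo_and_lt_evalAt h.irrational h.ne hD s hβ 0
  obtain ⟨hmem, hPq⟩ := hsub (Ioo_subset_Ico_self hq)
  obtain ⟨n, hn⟩ := hτ.exists_apply_eq_of_pos h (Ico_subset_Ico_left hx.1 hmem) hpos.le
  exact ⟨n, q, hn ▸ hPq, hn⟩

end IsLift

end Lifts

section Endpoints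

/-- The left endpoint of the interval coded by the letter `a`; the discontinuities of `T3` are
`leftEndpoint ε l c a` for `a ≠ 0`. -/
def leftEndpoint (ε l c : ℝ) : Fin 3 → ℝ := ![c, c + l - (1 - ε), c + ε]

/-- Condition (C2) with `μ` for `Λ'`: each discontinuity of `T3` has an ancestor in
`μ [c, c + l)`, and this ancestor is `μ` times one of the left endpoints. -/
def HasEndpointAncestors (ε l c μ : ℝ) : Prop :=
  ∀ a ≠ 0, ∃ b, IsAncestor ε l c (Ico (μ * c) (μ * (c + l))) (leftEndpoint ε l c a)
    (μ * leftEndpoint ε l c b)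

variable {ε l c μ x y z : ℝ} {a : Fin 3} {j : ℕ}

lemma leftEndpoint_zero (ε l c : ℝ) : leftEndpoint ε l c 0 = c := rfl

lemma leftEndpoint_one (ε l c : ℝ) : leftEndpoint ε l c 1 = c + l - (1 - ε) := rfl

lemma leftEndpoint_two (ε l c : ℝ) : leftEndpoint ε l c 2 = c + ε := rfl

lemma hasEndpointAncestors_iff (ε l c μ : ℝ) :
    HasEndpointAncestors ε l c μ ↔
      (∃ z, IsAncestor ε l c (Ico (μ * c) (μ * (c + l))) (c + ε) z ∧
        z ∈ ({μ * c, μ * (c + ε), μ * (c + l - (1 - ε))} : Set ℝ)) ∧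
      (∃ z, IsAncestor ε l c (Ico (μ * c) (μ * (c + l))) (c + l - (1 - ε)) z ∧
        z ∈ ({μ * c, μ * (c + ε), μ * (c + l - (1 - ε))} : Set ℝ)) := by
  have hrange : ({μ * c, μ * (c + ε), μ * (c + l - (1 - ε))} : Set ℝ) =
      range fun b ↦ μ * leftEndpoint ε l c b := by
    ext z
    simp [leftEndpoint, Fin.exists_fin_succ, eq_comm, or_comm]
  have key (P : ℝ → Prop) : (∃ z, P z ∧ z ∈ range fun b ↦ μ * leftEndpoint ε l c b) ↔
      ∃ b, P (μ * leftEndpoint ε l c b) := by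
    constructor
    · rintro ⟨_, hz, b, rfl⟩
      exact ⟨b, hz⟩
    · rintro ⟨b, hb⟩
      exact ⟨_, hb, b, rfl⟩
  rw [hrange, key, key, and_comm, HasEndpointAncestors]
  simp [Fin.forall_fin_succ, leftEndpoint_one, leftEndpoint_two]

lemma IsNondegenerate.leftEndpoint_mem (h : IsNondegenerate ε l) (c : ℝ) (a : Fin 3) :
    leftEndpoint ε l c a ∈ Ico c (c + l) := by
  obtain ⟨hl, hl', hl1⟩ := h
  match a with
  | 0 => rw [leftEndpoint_zero]; constructor <;> linarith
  | 1 => rw [leftEndpoint_one]; constructor <;> linarith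
  | 2 => rw [leftEndpoint_two]; constructor <;> linarith

lemma IsNondegenerate.letter3_leftEndpoint (h : IsNondegenerate ε l) (c : ℝ) (a : Fin 3) :
    letter3 ε l c (leftEndpoint ε l c a) = a := by
  obtain ⟨-, hl', hl1⟩ := h
  match a with
  | 0 => exact if_pos (by rw [leftEndpoint_zero]; linarith)
  | 1 =>
    rw [letter3, if_neg, if_pos] <;> rw [leftEndpoint_one] <;> linarith
  | 2 =>
    rw [letter3, if_neg, if_neg] <;> rw [leftEndpoint_two] <;> linarith

lemma leftEndpoint_letter3_le (hx : c ≤ x) : leftEndpoint ε l c (letter3 ε l c x) ≤ x := by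
  unfold letter3
  split_ifs <;> simp [leftEndpoint] <;> linarith

lemma letter3_eq_of_mem_Icc (hl : l < 1) (hy : y ∈ Icc x z)
    (hxz : letter3 ε l c x = letter3 ε l c z) : letter3 ε l c y = letter3 ε l c x :=
  le_antisymm ((monotone_letter3 hl ε c hy.2).trans hxz.ge) (monotone_letter3 hl ε c hy.1)

lemma IsNondegenerate.letter3_ne_iff (h : IsNondegenerate ε l) (hx : c ≤ x) (hxy : x ≤ y) :
    letter3 ε l c x ≠ letter3 ε l c y ↔
      ∃ a, x < leftEndpoint ε l c a ∧ leftEndpoint ε l c a ≤ y := by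
  constructor
  · contrapose!
    intro hno
    have h1 := hno 1
    have h2 := hno 2
    rw [leftEndpoint_one] at h1
    rw [leftEndpoint_two] at h2
    unfold letter3
    split_ifs <;> first | rfl | (exfalso; grind)
  · rintro ⟨a, hxa, hay⟩ heq
    have ha : a = letter3 ε l c x := by
      rw [← h.letter3_leftEndpoint c a]
      exact letter3_eq_of_mem_Icc h.lt_one ⟨hxa.le, hay⟩ heq
    exact hxa.not_ge (ha ▸ leftEndpoint_letter3_le hx)

lemma itinerary_eq_of_mem_Icc (hl : l < 1) (hy : y ∈ Icc x z)
    (hxz : ∀ i < j, letter3 ε l c ((T3 ε l c)^[i] x) = letter3 ε l c ((T3 ε l c)^[i] z)) :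
    ∀ i < j, letter3 ε l c ((T3 ε l c)^[i] y) = letter3 ε l c ((T3 ε l c)^[i] x) := by
  intro i
  induction i using Nat.strong_induction_on with
  | _ i ih =>
    intro hi
    have hyx := displacement_congr fun m hm ↦ ih m hm (hm.trans hi)
    have hzx := displacement_congr fun m hm ↦ hxz m (hm.trans hi)
    refine letter3_eq_of_mem_Icc hl ?_ (hxz i hi)
    simp only [iterate_T3_eq_add_displacement, hyx, ← hzx]
    exact ⟨by gcongr; exact hy.1, by gcongr; exact hy.2⟩

lemma iterate_T3_eq_add_of_mem_Icc (hl : l < 1) (hy : y ∈ Icc x z)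
    (hxz : ∀ i < j, letter3 ε l c ((T3 ε l c)^[i] x) = letter3 ε l c ((T3 ε l c)^[i] z)) :
    (T3 ε l c)^[j] y = y + evalAt ε (displacement ε l c j x) := by
  rw [iterate_T3_eq_add_displacement, displacement_congr (itinerary_eq_of_mem_Icc hl hy hxz)]

lemma iterate_T3_notMem_of_mem_Icc (hl : l < 1) {α β : ℝ} (hx : x ∈ Ico α β)
    (hz : z ∈ Ico α β) (hy : y ∈ Icc x z)
    (hxz : ∀ i < j, letter3 ε l c ((T3 ε l c)^[i] x) = letter3 ε l c ((T3 ε l c)^[i] z))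
    (hxj : (T3 ε l c)^[j] x ∉ Ico α β) (hzj : (T3 ε l c)^[j] z ∉ Ico α β) :
    (T3 ε l c)^[j] y ∉ Ico α β := by
  have hle : x ≤ z := hy.1.trans hy.2
  rw [iterate_T3_eq_add_displacement] at hxj
  rw [iterate_T3_eq_add_of_mem_Icc hl ⟨hle, le_rfl⟩ hxz] at hzj
  rw [iterate_T3_eq_add_of_mem_Icc hl hy hxz]
  simp only [mem_Ico, mem_Icc, not_and_or, not_le, not_lt] at *
  rcases hxj with hxj | hxj <;> rcases hzj with hzj | hzj <;>
    first | (left; linarith) | (right; linarith)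

lemma IsNondegenerate.exists_mem_Ioc_iterate_eq_leftEndpoint (h : IsNondegenerate ε l)
    (hle : x ≤ z) (hxj : c ≤ (T3 ε l c)^[j] x)
    (hxz : ∀ i < j, letter3 ε l c ((T3 ε l c)^[i] x) = letter3 ε l c ((T3 ε l c)^[i] z))
    (hne : letter3 ε l c ((T3 ε l c)^[j] x) ≠ letter3 ε l c ((T3 ε l c)^[j] z)) :
    ∃ a ≠ 0, ∃ y ∈ Ioc x z, (T3 ε l c)^[j] y = leftEndpoint ε l c a := by
  have hx := iterate_T3_eq_add_displacement ε l c j x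
  have hz := iterate_T3_eq_add_of_mem_Icc h.lt_one ⟨hle, le_rfl⟩ hxz
  obtain ⟨a, hxa, haz⟩ := (h.letter3_ne_iff hxj (by rw [hx, hz]; gcongr)).1 hne
  have ha : a ≠ 0 := fun ha ↦ hxa.not_ge (ha ▸ hxj)
  rw [hx, ← lt_sub_iff_add_lt] at hxa
  rw [hz, ← sub_le_iff_le_add] at haz
  refine ⟨a, ha, _, ⟨hxa, haz⟩, ?_⟩
  rw [iterate_T3_eq_add_of_mem_Icc h.lt_one ⟨hxa.le, haz⟩ hxz, sub_add_cancel]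

lemma IsNondegenerate.isAncestor_unique (h : IsNondegenerate ε l) {J : Set ℝ}
    (hJ : J ⊆ Ico c (c + l)) {d z w : ℝ} (hz : IsAncestor ε l c J d z)
    (hw : IsAncestor ε l c J d w) : z = w := by
  obtain ⟨hzJ, m, rfl, hzret⟩ := hz
  obtain ⟨hwJ, n, hn, hwret⟩ := hw
  wlog hmn : m ≤ n generalizing z w m n
  · exact (this hwJ n hwret hzJ m hn.symm hzret (le_of_not_ge hmn)).symm
  obtain ⟨i, rfl⟩ := Nat.exists_eq_add_of_le hmn
  rw [Function.iterate_add_apply] at hn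
  have hiz : (T3 ε l c)^[i] w = z :=
    h.injOn_iterate_T3 c m (h.iterate_T3_mem (hJ hwJ) i) (hJ hzJ) hn
  rcases i.eq_zero_or_pos with rfl | hi
  · exact hiz.symm
  · exact absurd (hiz ▸ hzJ) (hwret i hi (by omega))

end Endpoints

section Words

variable {A : Type*} {u : ℤ → A} {v w : List A} {φ ψ : A → List A} {k k' : ℤ → ℤ} {m n : ℤ}

/-- The word `w` occurs in `u` at position `m`. -/
def OccursAt (u : ℤ → A) (w : List A) (m : ℤ) : Prop :=
  ∀ (i : ℕ) (h : i < w.length), u (m + i) = w[i]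

/-- The map `k` cuts `u` into the consecutive words `φ (u n)`, the `n`-th of them starting at
`k n`: it is a witness of `u` being a fixed point of `φ`. -/
structure IsCutting (φ : A → List A) (u : ℤ → A) (k : ℤ → ℤ) : Prop where
  strictMono : StrictMono k
  zero : k 0 = 0
  succ (n : ℤ) : k (n + 1) = k n + (φ (u n)).length
  occursAt (n : ℤ) : OccursAt u (φ (u n)) (k n)

lemma isFixedPointSubstZ_iff : IsFixedPointSubstZ φ u ↔ ∃ k, IsCutting φ u k :=
  ⟨fun ⟨k, h1, h2, h3, h4⟩ ↦ ⟨k, h1, h2, h3, h4⟩, fun ⟨k, h⟩ ↦ ⟨k, h.1, h.2, h.3, h.4⟩⟩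

lemma occursAt_nil (u : ℤ → A) (m : ℤ) : OccursAt u [] m := fun _ h ↦ absurd h (Nat.not_lt_zero _)

lemma OccursAt.append (hv : OccursAt u v m) (hw : OccursAt u w (m + v.length)) :
    OccursAt u (v ++ w) m := by
  intro i hi
  rcases lt_or_ge i v.length with hiv | hiv
  · rw [List.getElem_append_left hiv, hv i hiv]
  · rw [List.getElem_append_right hiv, ← hw (i - v.length), Nat.cast_sub hiv]
    congr 1
    ring

lemma occursAt_cons {a : A} : OccursAt u (a :: w) m ↔ u m = a ∧ OccursAt u w (m + 1) := by
  have hshift (i : ℕ) : m + (i + 1 : ℕ) = m + 1 + i := by push_cast; ring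
  constructor
  · refine fun h ↦ ⟨(congrArg u (add_zero m).symm).trans (h 0 (Nat.succ_pos _)), fun i hi ↦ ?_⟩
    rw [← hshift]
    exact h (i + 1) (Nat.succ_lt_succ hi)
  · rintro ⟨ha, hw⟩ (_ | i) hi
    · exact (congrArg u (add_zero m)).trans ha
    · rw [hshift]
      exact hw i (Nat.lt_of_succ_lt_succ hi)

lemma OccursAt.sum_range {M : Type*} [AddCommMonoid M] (hw : OccursAt u w m) (g : A → M) :
    ∑ i ∈ Finset.range w.length, g (u (m + i)) = (w.map g).sum := by
  rw [← Fin.sum_univ_eq_sum_range, ← List.sum_ofFn]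
  congr 1
  refine List.ext_getElem (by simp) fun i hi _ ↦ ?_
  simp [hw i (by simpa using hi)]

lemma substWord_cons (φ : A → List A) (a : A) (w : List A) :
    substWord φ (a :: w) = φ a ++ substWord φ w := List.flatMap_cons

lemma exists_one_lt_length_of_isPrimitiveSubst [Nontrivial A] (hφ : IsPrimitiveSubst φ) :
    ∃ n, ∀ a, 1 < ((substWord φ)^[n] [a]).length := by
  obtain ⟨n, -, hn⟩ := hφ
  obtain ⟨b, c, hbc⟩ := exists_pair_ne A
  refine ⟨n, fun a ↦ ?_⟩
  by_contra! hle
  obtain ⟨d, hd⟩ := List.length_eq_one_iff.1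
    (hle.antisymm (List.length_pos_of_mem (hn a b)))
  have hb := hd ▸ hn a b
  have hc := hd ▸ hn a c
  exact hbc ((List.mem_singleton.1 hb).trans (List.mem_singleton.1 hc).symm)

namespace IsCutting

lemma apply_add_length (hk : IsCutting φ u k) (hw : OccursAt u w m) :
    k (m + w.length) = k m + (substWord φ w).length := by
  induction w generalizing m with
  | nil => simp [substWord]
  | cons a w ih =>
    obtain ⟨rfl, hw'⟩ := occursAt_cons.1 hw
    have hlen : m + (u m :: w).length = m + 1 + w.length := by
      push_cast [List.length_cons]; ring
    rw [hlen, ih hw', hk.succ, substWord_cons, List.length_append, Nat.cast_add, add_assoc]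

lemma occursAt_substWord (hk : IsCutting φ u k) (hw : OccursAt u w m) :
    OccursAt u (substWord φ w) (k m) := by
  induction w generalizing m with
  | nil => exact occursAt_nil u _
  | cons a w ih =>
    obtain ⟨rfl, hw'⟩ := occursAt_cons.1 hw
    rw [substWord_cons]
    exact (hk.occursAt m).append (hk.succ m ▸ ih hw')

lemma comp (hk : IsCutting φ u k) (hk' : IsCutting ψ u k') :
    IsCutting (fun a ↦ substWord φ (ψ a)) u (k ∘ k') where
  strictMono := hk.strictMono.comp hk'.strictMono
  zero := by rw [Function.comp_apply, hk'.zero, hk.zero]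
  succ n := by
    simp only [Function.comp_apply, hk'.succ, hk.apply_add_length (hk'.occursAt n)]
  occursAt n := hk.occursAt_substWord (hk'.occursAt n)

lemma iterate (hk : IsCutting φ u k) (n : ℕ) :
    IsCutting (fun a ↦ (substWord φ)^[n] [a]) u k^[n] := by
  induction n with
  | zero =>
    exact ⟨strictMono_id, rfl, fun _ ↦ rfl, fun m ↦ occursAt_cons.2 ⟨rfl, occursAt_nil u _⟩⟩
  | succ n ih => simpa only [Function.iterate_succ', Function.comp_apply] using hk.comp ih

lemma mem_of_mem_Ico (hk : IsCutting φ u k) (hm : m ∈ Ico (k n) (k (n + 1))) :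
    u m ∈ φ (u n) := by
  obtain ⟨i, rfl⟩ := Int.le.dest hm.1
  have hi : i < (φ (u n)).length := by exact_mod_cast lt_of_add_lt_add_left (hk.succ n ▸ hm.2)
  rw [hk.occursAt n i hi]
  exact List.getElem_mem hi

end IsCutting

end Words

section ReturnCodings

/-- The endomorphism `f` of `ℤ²` becomes multiplication by `μ` under evaluation at `ε` and
multiplication by `Λ` under evaluation at `ε'`. -/
structure IsDilation (ε ε' μ Λ : ℝ) (f : ℤ × ℤ →+ ℤ × ℤ) : Prop where
  evalAt_map (p : ℤ × ℤ) : evalAt ε (f p) = μ * evalAt ε p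
  evalAt'_map (p : ℤ × ℤ) : evalAt ε' (f p) = Λ * evalAt ε' p

lemma IsDilation.comp {ε ε' μ Λ μ' Λ' : ℝ} {f g : ℤ × ℤ →+ ℤ × ℤ} (hf : IsDilation ε ε' μ Λ f)
    (hg : IsDilation ε ε' μ' Λ' g) : IsDilation ε ε' (μ * μ') (Λ * Λ') (f.comp g) where
  evalAt_map p := by rw [AddMonoidHom.comp_apply, hf.evalAt_map, hg.evalAt_map, mul_assoc]
  evalAt'_map p := by rw [AddMonoidHom.comp_apply, hf.evalAt'_map, hg.evalAt'_map, mul_assoc]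

/-- A dilation that contracts the line of `ε` without reversing it and expands that of `ε'`. -/
structure IsHyperbolic (ε ε' μ Λ : ℝ) (f : ℤ × ℤ →+ ℤ × ℤ) : Prop
    extends IsDilation ε ε' μ Λ f where
  pos : 0 < μ
  lt_one : μ < 1
  one_lt : 1 < Λ

/-- The word `φ a` codes the orbit of `μ x`, for every `x` with letter `a`, up to the return
of this orbit to `μ (T x)`; the displacement of that return is `f (step a)`. -/
structure IsReturnCoding (ε l c μ : ℝ) (f : ℤ × ℤ →+ ℤ × ℤ) (φ : Fin 3 → List (Fin 3)) :
    Prop where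
  letter {x : ℝ} (hx : x ∈ Ico c (c + l)) (i : ℕ) (hi : i < (φ (letter3 ε l c x)).length) :
    letter3 ε l c ((T3 ε l c)^[i] (μ * x)) = (φ (letter3 ε l c x))[i]
  displacement {x : ℝ} (hx : x ∈ Ico c (c + l)) :
    displacement ε l c (φ (letter3 ε l c x)).length (μ * x) = f (step (letter3 ε l c x))

variable {ε ε' l c μ Λ x x' : ℝ} {f : ℤ × ℤ →+ ℤ × ℤ} {φ : Fin 3 → List (Fin 3)} {j : ℕ}
  {u : ℤ → Fin 3} {τ : ℤ → ℤ × ℤ}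

lemma mul_mem_Ico_mul (hμ : 0 < μ) (hx : x ∈ Ico c (c + l)) :
    μ * x ∈ Ico (μ * c) (μ * (c + l)) :=
  ⟨by gcongr; exact hx.1, by gcongr; exact hx.2⟩

lemma Ico_mul_subset (h0 : 0 ∈ Ico c (c + l)) (hμ : 0 < μ) (hμ1 : μ < 1) :
    Ico (μ * c) (μ * (c + l)) ⊆ Ico c (c + l) := by
  rintro x ⟨hcx, hxl⟩
  exact ⟨by nlinarith [h0.1], by nlinarith [h0.2]⟩

namespace IsHyperbolic

lemma mul_mem (hf : IsHyperbolic ε ε' μ Λ f) (h0 : 0 ∈ Ico c (c + l))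
    (hx : x ∈ Ico c (c + l)) : μ * x ∈ Ico c (c + l) :=
  Ico_mul_subset h0 hf.pos hf.lt_one (mul_mem_Ico_mul hf.pos hx)

-- The visits of the orbit of `μ x` to `μ [c, c + l)` are the points `μ (T^i x)`.
lemma iterate_notMem (hf : IsHyperbolic ε ε' μ Λ f) (hsurj : Function.Surjective f)
    (h : IsSturmExchange ε ε' l) (hx : x ∈ Ico c (c + l)) (hj : 0 < j)
    (hlt : evalAt ε' (displacement ε l c j (μ * x)) <
      Λ * evalAt ε' (step (letter3 ε l c x))) :
    (T3 ε l c)^[j] (μ * x) ∉ Ico (μ * c) (μ * (c + l)) := by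
  intro hmem
  obtain ⟨p, hp⟩ := hsurj (displacement ε l c j (μ * x))
  have hΛ : 0 < Λ := one_pos.trans hf.one_lt
  have hpos : 0 < evalAt ε' p := by
    have := strictMono_evalAt_displacement h.neg ε l c (μ * x) hj
    simp only [displacement_zero, map_zero, ← hp, hf.evalAt'_map] at this
    exact pos_of_mul_pos_right this hΛ.le
  rw [iterate_T3_eq_add_displacement, ← hp, hf.evalAt_map, ← mul_add] at hmem
  rw [← hp, hf.evalAt'_map] at hlt
  refine (lt_of_mul_lt_mul_left hlt hΛ.le).not_ge
    (evalAt_step_le_of_add_mem h.toIsNondegenerate h.neg hx hpos ⟨?_, ?_⟩)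
  · exact le_of_mul_le_mul_left hmem.1 hf.pos
  · exact lt_of_mul_lt_mul_left hmem.2 hf.pos.le

-- A discontinuity separating the two orbits at time `j` would have an ancestor strictly between
-- `μ x` and `μ x'`, hence of the form `μ` times a left endpoint by (C2).
lemma letter_iterate_eq_of_le (hf : IsHyperbolic ε ε' μ Λ f) (hsurj : Function.Surjective f)
    (h : IsSturmExchange ε ε' l) (h0 : 0 ∈ Ico c (c + l)) (hanc : HasEndpointAncestors ε l c μ)
    (hx : x ∈ Ico c (c + l)) (hx' : x' ∈ Ico c (c + l)) (hxx' : x ≤ x')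
    (hletter : letter3 ε l c x = letter3 ε l c x')
    (heq : ∀ i < j, letter3 ε l c ((T3 ε l c)^[i] (μ * x)) =
      letter3 ε l c ((T3 ε l c)^[i] (μ * x')))
    (hlt : evalAt ε' (displacement ε l c j (μ * x)) <
      Λ * evalAt ε' (step (letter3 ε l c x))) :
    letter3 ε l c ((T3 ε l c)^[j] (μ * x)) = letter3 ε l c ((T3 ε l c)^[j] (μ * x')) := by
  by_contra hne
  have hμx := mul_mem_Ico_mul hf.pos hx
  have hμx' := mul_mem_Ico_mul hf.pos hx'
  obtain ⟨b, hb, z, hz, hzb⟩ := h.exists_mem_Ioc_iterate_eq_leftEndpoint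
    (mul_le_mul_of_nonneg_left hxx' hf.pos.le)
    (h.iterate_T3_mem (hf.mul_mem h0 hx) j).1 heq hne
  have hzanc : IsAncestor ε l c (Ico (μ * c) (μ * (c + l))) (leftEndpoint ε l c b) z := by
    refine ⟨⟨hμx.1.trans hz.1.le, hz.2.trans_lt hμx'.2⟩, j, hzb, fun i hi hij ↦ ?_⟩
    have hlti : evalAt ε' (displacement ε l c i (μ * x)) <
        Λ * evalAt ε' (step (letter3 ε l c x)) :=
      ((strictMono_evalAt_displacement h.neg ε l c (μ * x)).monotone hij).trans_lt hlt
    refine iterate_T3_notMem_of_mem_Icc h.lt_one hμx hμx' (Ioc_subset_Icc_self hz)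
      (fun m hm ↦ heq m (hm.trans_le hij)) (hf.iterate_notMem hsurj h hx hi hlti)
      (hf.iterate_notMem hsurj h hx' hi ?_)
    rwa [← displacement_congr fun m hm ↦ heq m (hm.trans_le hij), ← hletter]
  obtain ⟨a, ha⟩ := hanc b hb
  obtain rfl := h.isAncestor_unique (Ico_mul_subset h0 hf.pos hf.lt_one) hzanc ha
  exact (h.letter3_ne_iff hx.1 hxx').2
    ⟨a, lt_of_mul_lt_mul_left hz.1 hf.pos.le, le_of_mul_le_mul_left hz.2 hf.pos⟩ hletter

lemma letter_iterate_eq (hf : IsHyperbolic ε ε' μ Λ f) (hsurj : Function.Surjective f)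
    (h : IsSturmExchange ε ε' l) (h0 : 0 ∈ Ico c (c + l)) (hanc : HasEndpointAncestors ε l c μ)
    (hx : x ∈ Ico c (c + l)) (hx' : x' ∈ Ico c (c + l))
    (hletter : letter3 ε l c x = letter3 ε l c x')
    (hlt : evalAt ε' (displacement ε l c j (μ * x)) <
      Λ * evalAt ε' (step (letter3 ε l c x))) :
    letter3 ε l c ((T3 ε l c)^[j] (μ * x)) = letter3 ε l c ((T3 ε l c)^[j] (μ * x')) := by
  induction j using Nat.strong_induction_on with
  | _ j ih =>
    have heq : ∀ i < j, letter3 ε l c ((T3 ε l c)^[i] (μ * x)) =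
        letter3 ε l c ((T3 ε l c)^[i] (μ * x')) := fun i hi ↦
      ih i hi ((strictMono_evalAt_displacement h.neg ε l c (μ * x) hi).trans hlt)
    rcases le_total x x' with hle | hle
    · exact hf.letter_iterate_eq_of_le hsurj h h0 hanc hx hx' hle hletter heq hlt
    · refine (hf.letter_iterate_eq_of_le hsurj h h0 hanc hx' hx hle hletter.symm
        (fun i hi ↦ (heq i hi).symm) ?_).symm
      rwa [← displacement_congr heq, ← hletter]

lemma exists_isReturnCoding (hf : IsHyperbolic ε ε' μ Λ f) (hsurj : Function.Surjective f)
    (h : IsSturmExchange ε ε' l) (h0 : 0 ∈ Ico c (c + l))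
    (hanc : HasEndpointAncestors ε l c μ) : ∃ φ, IsReturnCoding ε l c μ f φ := by
  have hreturn (a : Fin 3) :
      ∃ j, displacement ε l c j (μ * leftEndpoint ε l c a) = f (step a) := by
    have hmem := h.leftEndpoint_mem c a
    refine h.exists_displacement_eq (hf.mul_mem h0 hmem) ?_ ?_
    · rw [hf.evalAt'_map]
      exact mul_nonneg (one_pos.trans hf.one_lt).le (evalAt_step_pos h.neg a).le
    · have hT := T3_eq_add_evalAt_step ε l c (leftEndpoint ε l c a)
      rw [h.letter3_leftEndpoint] at hT
      rw [hf.evalAt_map, ← mul_add, ← hT]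
      exact hf.mul_mem h0 (h.mapsTo_T3 c hmem)
  choose r hr using hreturn
  have hitinerary {x : ℝ} (hx : x ∈ Ico c (c + l)) (i : ℕ) (hi : i < r (letter3 ε l c x)) :
      letter3 ε l c ((T3 ε l c)^[i] (μ * leftEndpoint ε l c (letter3 ε l c x))) =
        letter3 ε l c ((T3 ε l c)^[i] (μ * x)) := by
    refine hf.letter_iterate_eq hsurj h h0 hanc (h.leftEndpoint_mem c _) hx
      (h.letter3_leftEndpoint c _) ?_
    rw [h.letter3_leftEndpoint, ← hf.evalAt'_map, ← hr]
    exact strictMono_evalAt_displacement h.neg ε l c _ hi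
  refine ⟨fun a ↦ List.ofFn fun i : Fin (r a) ↦
    letter3 ε l c ((T3 ε l c)^[i] (μ * leftEndpoint ε l c a)), fun hx i hi ↦ ?_, fun hx ↦ ?_⟩
  · rw [List.getElem_ofFn, hitinerary hx i (by simpa using hi)]
  · rw [List.length_ofFn, ← hr, displacement_congr fun i hi ↦ hitinerary hx i hi]

end IsHyperbolic

end ReturnCodings

section FixedPoints

variable {ε ε' l c μ Λ α β : ℝ} {f : ℤ × ℤ →+ ℤ × ℤ} {φ : Fin 3 → List (Fin 3)}
  {u : ℤ → Fin 3} {τ : ℤ → ℤ × ℤ} {k : ℤ → ℤ}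

lemma IsDilation.evalAt_iterate (hf : IsDilation ε ε' μ Λ f) (n : ℕ) (p : ℤ × ℤ) :
    evalAt ε (f^[n] p) = μ ^ n * evalAt ε p := by
  induction n with
  | zero => simp
  | succ n ih => rw [Function.iterate_succ_apply', hf.evalAt_map, ih, pow_succ', mul_assoc]

lemma IsDilation.evalAt'_iterate (hf : IsDilation ε ε' μ Λ f) (n : ℕ) (p : ℤ × ℤ) :
    evalAt ε' (f^[n] p) = Λ ^ n * evalAt ε' p := by
  induction n with
  | zero => simp
  | succ n ih => rw [Function.iterate_succ_apply', hf.evalAt'_map, ih, pow_succ', mul_assoc]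

-- Iterates of `f` squeeze a bounded region of the plane, which always contains a lattice point,
-- into the strip above `(α, β)`.
lemma IsHyperbolic.exists_forall_exists_evalAt_mem (hf : IsHyperbolic ε ε' μ Λ f) (hne : ε' ≠ ε)
    (hαβ : α < β) :
    ∃ G, ∀ X, ∃ p, evalAt ε p ∈ Ioo α β ∧ evalAt ε' p ∈ Icc X (X + G) := by
  obtain ⟨N, hN⟩ : ∃ N, μ ^ N * (1 + |ε|) < (β - α) / 2 := by
    have hlim := (tendsto_pow_atTop_nhds_zero_of_lt_one hf.pos.le hf.lt_one).mul_const (1 + |ε|)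
    rw [zero_mul] at hlim
    exact (hlim.eventually_lt_const (half_pos (sub_pos.2 hαβ))).exists
  have hμN : 0 < μ ^ N := pow_pos hf.pos N
  have hΛN : 0 < Λ ^ N := pow_pos (one_pos.trans hf.one_lt) N
  refine ⟨2 * (Λ ^ N * (1 + |ε'|)), fun X ↦ ?_⟩
  obtain ⟨p, hp, hp'⟩ := exists_evalAt_near hne ((α + β) / 2 / μ ^ N)
    ((X + Λ ^ N * (1 + |ε'|)) / Λ ^ N)
  have scale {r a b s : ℝ} (hr : 0 < r) (h : |b - a / r| ≤ s) : |r * b - a| ≤ r * s := calc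
    |r * b - a| = r * |b - a / r| := by
      rw [← abs_of_pos hr, ← abs_mul, abs_of_pos hr, mul_sub, mul_div_cancel₀ _ hr.ne']
    _ ≤ r * s := by gcongr
  obtain ⟨hp1, hp2⟩ := abs_le.1 (scale hμN hp)
  obtain ⟨hp1', hp2'⟩ := abs_le.1 (scale hΛN hp')
  refine ⟨f^[N] p, ?_, ?_⟩
  · rw [hf.evalAt_iterate]
    constructor <;> linarith
  · rw [hf.evalAt'_iterate]
    constructor <;> linarith

lemma IsNondegenerate.exists_forall_mem_Ioo_letter3_eq (h : IsNondegenerate ε l) (c : ℝ)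
    (a : Fin 3) :
    ∃ α β, α < β ∧ ∀ x ∈ Ioo α β, x ∈ Ico c (c + l) ∧ letter3 ε l c x = a := by
  have hmem := h.leftEndpoint_mem c a
  have hev := eventually_nhdsGE_letter3_eq ε l c (leftEndpoint ε l c a)
  rw [h.letter3_leftEndpoint] at hev
  obtain ⟨β, hβ, hsub⟩ := mem_nhdsGE_iff_exists_Ico_subset.1
    (inter_mem (Ico_mem_nhdsGE hmem.2) hev)
  exact ⟨_, β, hβ, fun x hx ↦
    ⟨⟨hmem.1.trans hx.1.le, (hsub (Ioo_subset_Ico_self hx)).1.2⟩,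
      (hsub (Ioo_subset_Ico_self hx)).2⟩⟩

namespace IsReturnCoding

lemma ne_nil (hφ : IsReturnCoding ε l c μ f φ) (hf : IsHyperbolic ε ε' μ Λ f)
    (h : IsNondegenerate ε l) (hε' : ε' < 0) (a : Fin 3) : φ a ≠ [] := by
  intro hnil
  have hdisp := hφ.displacement (h.leftEndpoint_mem c a)
  rw [h.letter3_leftEndpoint, hnil, List.length_nil, displacement_zero] at hdisp
  have hpos := mul_pos (one_pos.trans hf.one_lt) (evalAt_step_pos hε' a)
  rw [← hf.evalAt'_map, ← hdisp, map_zero] at hpos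
  exact hpos.false

lemma exists_isCutting (hφ : IsReturnCoding ε l c μ f φ) (hf : IsHyperbolic ε ε' μ Λ f)
    (h : IsSturmExchange ε ε' l) (hτ : IsLift ε l c u τ) :
    ∃ k, IsCutting φ u k ∧ ∀ n, τ (k n) = f (τ n) := by
  have hex (n : ℤ) : ∃ m, τ m = f (τ n) :=
    hτ.exists_apply_eq h (by rw [hf.evalAt_map]; exact hf.mul_mem hτ.zero_mem (hτ.mem n))
  choose k hk using hex
  refine ⟨k, ⟨fun m n hmn ↦ ?_, ?_, fun n ↦ ?_, fun n i hi ↦ ?_⟩, hk⟩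
  · rw [← (hτ.strictMono h.neg).lt_iff_lt]
    simp only [hk, hf.evalAt'_map]
    exact mul_lt_mul_of_pos_left (hτ.strictMono h.neg hmn) (one_pos.trans hf.one_lt)
  · exact hτ.injective h.neg (by rw [hk, hτ.zero, map_zero])
  · refine hτ.injective h.neg ?_
    rw [hk, hτ.apply_add_natCast, hk, hf.evalAt_map, hτ.succ, map_add, hτ.letter,
      hφ.displacement (hτ.mem n)]
  · rw [hτ.letter_add_natCast, hk, hf.evalAt_map]
    simpa only [hτ.letter n] using hφ.letter (hτ.mem n) i (by rwa [← hτ.letter])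

end IsReturnCoding

lemma IsCutting.isPrimitiveSubst (hk : IsCutting φ u k) (hτk : ∀ n, τ (k n) = f (τ n))
    (hf : IsHyperbolic ε ε' μ Λ f) (h : IsSturmExchange ε ε' l) (hτ : IsLift ε l c u τ) :
    IsPrimitiveSubst φ := by
  choose α β hαβ hletter using h.exists_forall_mem_Ioo_letter3_eq c
  choose G hG using fun b ↦ hf.exists_forall_exists_evalAt_mem h.ne (hαβ b)
  have hvisit (b : Fin 3) (X : ℝ) :
      ∃ m, u m = b ∧ evalAt ε' (τ m) ∈ Icc X (X + G b) := by
    obtain ⟨p, hp, hp'⟩ := hG b X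
    obtain ⟨m, rfl⟩ := hτ.exists_apply_eq h (hletter b _ hp).1
    exact ⟨m, (hτ.letter m).trans (hletter b _ hp).2, hp'⟩
  have hev (b : Fin 3) : ∀ᶠ n : ℕ in atTop, G b < Λ ^ n * -ε' :=
    ((tendsto_pow_atTop_atTop_of_one_lt hf.one_lt).atTop_mul_const
      (neg_pos.2 h.neg)).eventually_gt_atTop _
  obtain ⟨n, hnG, hn⟩ := ((eventually_all.2 hev).and (eventually_ge_atTop 1)).exists
  refine ⟨n, hn, fun a b ↦ ?_⟩
  have hτkn (m : ℤ) : evalAt ε' (τ (k^[n] m)) = Λ ^ n * evalAt ε' (τ m) := by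
    rw [Function.Semiconj.iterate_right (f := τ) hτk n m, hf.evalAt'_iterate]
  obtain ⟨m, rfl, -⟩ := hvisit a 0
  obtain ⟨i, rfl, hi⟩ := hvisit b (evalAt ε' (τ (k^[n] m)))
  refine (hk.iterate n).mem_of_mem_Ico ⟨(hτ.strictMono h.neg).le_iff_le.1 hi.1, ?_⟩
  refine (hτ.strictMono h.neg).lt_iff_lt.1 (hi.2.trans_lt ?_)
  have hstep : Λ ^ n * -ε' ≤ Λ ^ n * evalAt ε' (step (u m)) := by
    gcongr
    · exact pow_nonneg (one_pos.trans hf.one_lt).le n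
    · exact neg_le_evalAt_step h.neg _
  simp only [hτkn, hτ.succ, map_add, mul_add]
  linarith [hnG (u i)]

end FixedPoints

section AncestorsOfReturnCodings

variable {ε ε' l c μ Λ x : ℝ} {f : ℤ × ℤ →+ ℤ × ℤ} {φ : Fin 3 → List (Fin 3)}
  {u : ℤ → Fin 3} {τ : ℤ → ℤ × ℤ} {k : ℤ → ℤ} {a : Fin 3} {j : ℕ}

lemma IsCutting.isReturnCoding (hk : IsCutting φ u k) (hτk : ∀ n, τ (k n) = f (τ n))
    (hf : IsDilation ε ε' μ Λ f) (hμ : 0 < μ) (h : IsSturmExchange ε ε' l)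
    (hτ : IsLift ε l c u τ) : IsReturnCoding ε l c μ f φ := by
  suffices key : ∀ x ∈ Ico c (c + l),
      (∀ (i : ℕ) (hi : i < (φ (letter3 ε l c x)).length),
        letter3 ε l c ((T3 ε l c)^[i] (μ * x)) = (φ (letter3 ε l c x))[i]) ∧
      displacement ε l c (φ (letter3 ε l c x)).length (μ * x) = f (step (letter3 ε l c x)) from
    ⟨fun hx ↦ (key _ hx).1, fun hx ↦ (key _ hx).2⟩
  intro x hx
  have hscale : Tendsto (μ * ·) (𝓝[≥] x) (𝓝[≥] (μ * x)) :=
    (continuous_const_mul μ).continuousWithinAt.tendsto_nhdsWithin fun y hy ↦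
      mul_le_mul_of_nonneg_left (mem_Ici.1 hy) hμ.le
  have hev := (eventually_nhdsGE_letter3_eq ε l c x).and
    (hscale.eventually (eventually_nhdsGE_itinerary_eq ε l c (φ (letter3 ε l c x)).length (μ * x)))
  obtain ⟨n, -, ⟨hletter, hitinerary⟩, -⟩ := hτ.exists_of_eventually_nhdsGE h hx hev one_pos 0
  rw [← hf.evalAt_map, ← hτk] at hitinerary
  rw [← hletter, ← hτ.letter] at hitinerary ⊢
  refine ⟨fun i hi ↦ ?_, ?_⟩
  · rw [← hitinerary i hi, ← hτ.letter_add_natCast, hk.occursAt n i hi]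
  · have hadd := hτ.apply_add_natCast (k n) (φ (u n)).length
    rw [← hk.succ, hτk (n + 1), hτ.succ, map_add, ← hτk] at hadd
    rw [← displacement_congr hitinerary, ← add_left_cancel hadd]

namespace IsReturnCoding

lemma iterate_length (hφ : IsReturnCoding ε l c μ f φ) (hf : IsDilation ε ε' μ Λ f)
    (hx : x ∈ Ico c (c + l)) :
    (T3 ε l c)^[(φ (letter3 ε l c x)).length] (μ * x) = μ * T3 ε l c x := by
  rw [iterate_T3_eq_add_displacement, hφ.displacement hx, hf.evalAt_map, ← mul_add,
    ← T3_eq_add_evalAt_step]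

-- The orbit of `μ x` is the concatenation of the blocks coded by the words `φ (letter (T^i x))`.
lemma exists_iterate_eq (hφ : IsReturnCoding ε l c μ f φ) (hf : IsDilation ε ε' μ Λ f)
    (hne : ∀ a, φ a ≠ []) (h : IsNondegenerate ε l) (hx : x ∈ Ico c (c + l)) (m : ℕ) :
    ∃ i, ∃ j < (φ (letter3 ε l c ((T3 ε l c)^[i] x))).length,
      (T3 ε l c)^[m] (μ * x) = (T3 ε l c)^[j] (μ * (T3 ε l c)^[i] x) := by
  have hlen (i : ℕ) : 0 < (φ (letter3 ε l c ((T3 ε l c)^[i] x))).length :=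
    List.length_pos_iff.2 (hne _)
  induction m with
  | zero => exact ⟨0, 0, hlen 0, rfl⟩
  | succ m ih =>
    obtain ⟨i, j, hj, heq⟩ := ih
    rcases (Nat.succ_le_of_lt hj).lt_or_eq with hj | hj
    · exact ⟨i, j + 1, hj, by rw [Function.iterate_succ_apply', heq, Function.iterate_succ_apply']⟩
    · refine ⟨i + 1, 0, hlen _, ?_⟩
      rw [Function.iterate_succ_apply', heq, ← Function.iterate_succ_apply' (T3 ε l c) j, hj,
        hφ.iterate_length hf (h.iterate_T3_mem hx i), Function.iterate_zero_apply,
        Function.iterate_succ_apply' (T3 ε l c) i]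

lemma eq_leftEndpoint (hφ : IsReturnCoding ε l c μ f φ) (hμ : 0 < μ) (h : IsNondegenerate ε l)
    (hμc : ∀ y ∈ Ico c (c + l), μ * y ∈ Ico c (c + l))
    (hx : x ∈ Ico c (c + l)) (hj : j < (φ (letter3 ε l c x)).length)
    (ha : (T3 ε l c)^[j] (μ * x) = leftEndpoint ε l c a) :
    x = leftEndpoint ε l c (letter3 ε l c x) := by
  by_contra hne
  have hletter := h.letter3_leftEndpoint c (letter3 ε l c x)
  have hmem := h.leftEndpoint_mem c (letter3 ε l c x)
  set d := leftEndpoint ε l c (letter3 ε l c x)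
  have hlt : d < x := (leftEndpoint_letter3_le hx.1).lt_of_ne' hne
  have hitinerary (i : ℕ) (hi : i < (φ (letter3 ε l c x)).length) :
      letter3 ε l c ((T3 ε l c)^[i] (μ * d)) = letter3 ε l c ((T3 ε l c)^[i] (μ * x)) := by
    simpa only [hletter, hφ.letter hx i hi] using hφ.letter hmem i (by rwa [hletter])
  have hlt' : (T3 ε l c)^[j] (μ * d) < (T3 ε l c)^[j] (μ * x) := by
    rw [iterate_T3_eq_add_displacement, iterate_T3_eq_add_displacement,
      displacement_congr fun i hi ↦ hitinerary i (hi.trans hj)]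
    gcongr
  exact (h.letter3_ne_iff (h.iterate_T3_mem (hμc d hmem) j).1 hlt'.le).2
    ⟨a, ha ▸ hlt', ha.ge⟩ (hitinerary j hj)

lemma exists_iterate_eq_leftEndpoint (hφ : IsReturnCoding ε l c μ f φ)
    (hf : IsHyperbolic ε ε' μ Λ f) (h : IsSturmExchange ε ε' l) (h0 : 0 ∈ Ico c (c + l))
    (a : Fin 3) (s : ℤ × ℤ) :
    ∃ b q, ∃ j < (φ b).length, (T3 ε l c)^[j] (μ * leftEndpoint ε l c b) = leftEndpoint ε l c a ∧
      μ * leftEndpoint ε l c b = leftEndpoint ε l c a + evalAt ε (s + f q) := by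
  obtain ⟨x, q, hx, hxq, hneg⟩ : ∃ x q, x ∈ Ico c (c + l) ∧
      μ * x = leftEndpoint ε l c a + evalAt ε (s + f q) ∧ evalAt ε' (s + f q) < 0 := by
    have hl : c < c + l := h0.1.trans_lt h0.2
    obtain ⟨q, ⟨hcq, hql⟩, hq⟩ := exists_evalAt_mem_Ioo_and_evalAt_lt h.irrational
      h.ne (sub_lt_sub_right hl ((leftEndpoint ε l c a + evalAt ε s) / μ))
      (-evalAt ε' s / Λ)
    rw [sub_lt_iff_lt_add'] at hcq
    rw [lt_sub_iff_add_lt'] at hql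
    rw [lt_div_iff₀' (one_pos.trans hf.one_lt)] at hq
    refine ⟨_, q, ⟨hcq.le, hql⟩, ?_, ?_⟩
    · rw [mul_add, mul_div_cancel₀ _ hf.pos.ne', map_add, hf.evalAt_map, add_assoc]
    · rw [map_add, hf.evalAt'_map]
      linarith
  obtain ⟨m, hm⟩ := h.exists_displacement_eq (hf.mul_mem h0 hx) (p := -(s + f q))
    (by rw [map_neg]; exact (neg_pos.2 hneg).le)
    (by rw [hxq, map_neg, add_neg_cancel_right]; exact h.leftEndpoint_mem c a)
  obtain ⟨i, j, hj, hij⟩ := hφ.exists_iterate_eq hf.toIsDilation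
    (hφ.ne_nil hf h.toIsNondegenerate h.neg) h.toIsNondegenerate hx m
  rw [iterate_T3_eq_add_displacement ε l c m, hm, hxq, map_neg, add_neg_cancel_right] at hij
  have hend := hφ.eq_leftEndpoint hf.pos h.toIsNondegenerate (fun _ ↦ hf.mul_mem h0)
    (h.iterate_T3_mem hx i) hj hij.symm
  refine ⟨_, q + ThreeIet.displacement ε l c i x, j, hj, ?_, ?_⟩ <;> rw [← hend]
  · exact hij.symm
  · rw [iterate_T3_eq_add_displacement, mul_add, hxq, ← hf.evalAt_map, map_add f, ← add_assoc s,
      map_add _ (s + f q), add_assoc]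

-- Points of `leftEndpoint a + ℤ[ε]` represent all classes modulo `f`, whereas at most one of the
-- two classes `leftEndpoint a + ℤ[ε]`, for `a ≠ 0`, contains `μ c`.
lemma surjective (hφ : IsReturnCoding ε l c μ f φ) (hf : IsHyperbolic ε ε' μ Λ f)
    (h : IsSturmExchange ε ε' l) (h0 : 0 ∈ Ico c (c + l)) (hl : l ∉ Zbr ε) :
    Function.Surjective f := by
  have of_forall {x d : ℝ} (hx : ∀ s, ∃ q, x = d + evalAt ε (s + f q)) :
      Function.Surjective f := by
    intro s
    obtain ⟨q₀, hq₀⟩ := hx 0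
    obtain ⟨q, hq⟩ := hx s
    have heq : 0 + f q₀ = s + f q :=
      evalAt_injective h.irrational (add_left_cancel (hq₀.symm.trans hq))
    exact ⟨q₀ - q, by rw [map_sub, sub_eq_iff_eq_add, ← heq, zero_add]⟩
  have hsplit (a : Fin 3) (s : ℤ × ℤ) :
      (∃ p, μ * c = leftEndpoint ε l c a + evalAt ε p) ∨
        ∃ q, μ * leftEndpoint ε l c 1 = leftEndpoint ε l c a + evalAt ε (s + f q) := by
    obtain ⟨b, q, -, -, -, hb⟩ := hφ.exists_iterate_eq_leftEndpoint hf h h0 a s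
    match b with
    | 0 => exact .inl ⟨_, hb⟩
    | 1 => exact .inr ⟨q, hb⟩
    | 2 =>
      refine .inl ⟨s + f q - f (0, 1), ?_⟩
      rw [leftEndpoint_two, mul_add] at hb
      rw [map_sub, hf.evalAt_map, evalAt_apply ε (0, 1)]
      push_cast
      linarith
  by_cases hc : ∃ p, μ * c = leftEndpoint ε l c 2 + evalAt ε p
  · refine of_forall fun s ↦ (hsplit 1 s).resolve_left fun ⟨p', hp'⟩ ↦ hl ?_
    obtain ⟨p, hp⟩ := hc
    rw [leftEndpoint_one] at hp'
    rw [leftEndpoint_two] at hp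
    rw [Zbr_eq_range_evalAt]
    refine ⟨(1, 0) + (p - p'), ?_⟩
    rw [map_add, map_sub, evalAt_apply ε (1, 0)]
    push_cast
    linarith
  · exact of_forall fun s ↦ (hsplit 2 s).resolve_left hc

lemma hasEndpointAncestors (hφ : IsReturnCoding ε l c μ f φ) (hf : IsHyperbolic ε ε' μ Λ f)
    (hsurj : Function.Surjective f) (h : IsSturmExchange ε ε' l) (h0 : 0 ∈ Ico c (c + l)) :
    HasEndpointAncestors ε l c μ := by
  intro a _
  obtain ⟨b, -, j, hj, hja, -⟩ := hφ.exists_iterate_eq_leftEndpoint hf h h0 a 0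
  have hmem := h.leftEndpoint_mem c b
  refine ⟨b, mul_mem_Ico_mul hf.pos hmem, j, hja, fun i hi hij ↦ ?_⟩
  have hlen := hφ.displacement hmem
  refine hf.iterate_notMem hsurj h hmem hi ?_
  rw [h.letter3_leftEndpoint] at hlen ⊢
  rw [← hf.evalAt'_map, ← hlen]
  exact strictMono_evalAt_displacement h.neg ε l c _ (hij.trans_lt hj)

end IsReturnCoding

end AncestorsOfReturnCodings

section InvariantMeasure

lemma measurePreserving_restrict_of_injOn {G ι : Type*} [AddGroup G] [MeasurableSpace G]
    [MeasurableAdd G] {ν : Measure G} [ν.IsAddRightInvariant] [MeasurableSpace ι] [Countable ι]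
    [MeasurableSingletonClass ι] {T : G → G} {p : G → ι} {v : ι → G} {s : Set G}
    (hp : Measurable p) (hTp : ∀ x, T x = x + v (p x)) (hT : Measurable T)
    (hs : MeasurableSet s) (hνs : ν s ≠ ⊤) (hmaps : MapsTo T s s) (hinj : InjOn T s) :
    MeasurePreserving T (ν.restrict s) (ν.restrict s) := by
  refine ⟨hT, ?_⟩
  have : IsFiniteMeasure (ν.restrict s) := isFiniteMeasure_restrict.2 hνs
  refine Measure.eq_of_le_of_measure_univ_eq (Measure.le_iff.2 fun t ht ↦ ?_)
    (by rw [Measure.map_apply hT .univ, preimage_univ])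
  rw [Measure.map_apply hT ht, Measure.restrict_apply (hT ht), Measure.restrict_apply ht]
  set A : ι → Set G := fun i ↦ T ⁻¹' t ∩ s ∩ p ⁻¹' {i}
  have hA (i : ι) : MeasurableSet (A i) := ((hT ht).inter hs).inter (hp (measurableSet_singleton i))
  have himage (i : ι) : T '' A i = (· + -v i) ⁻¹' A i := by
    rw [← image_add_right]
    exact image_congr fun x hx ↦ by rw [hTp, show p x = i from hx.2]
  have hdisj : Pairwise (Function.onFun Disjoint A) := fun i j hij ↦
    disjoint_left.2 fun x hi hj ↦ hij (hi.2.symm.trans hj.2)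
  have hAs (i : ι) : A i ⊆ s := fun x hx ↦ hx.1.2
  calc
    ν (T ⁻¹' t ∩ s) = ν (⋃ i, A i) := by
      rw [← inter_iUnion, ← preimage_iUnion, iUnion_of_singleton, preimage_univ, inter_univ]
    _ = ∑' i, ν (T '' A i) := by
      rw [measure_iUnion hdisj hA]
      exact tsum_congr fun i ↦ by rw [himage, measure_preimage_add_right]
    _ = ν (⋃ i, T '' A i) := by
      refine (measure_iUnion (fun i j hij ↦ ?_) fun i ↦ ?_).symm
      · exact (hdisj hij).image hinj (hAs i) (hAs j)
      · rw [himage]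
        exact measurable_add_const _ (hA i)
    _ ≤ ν (t ∩ s) := measure_mono (iUnion_subset fun i ↦
      image_subset_iff.2 fun x hx ↦ ⟨hx.1.1, hmaps hx.1.2⟩)

lemma integral_eq_zero_of_norm_birkhoffSum_le {α E : Type*} [MeasurableSpace α]
    [NormedAddCommGroup E] [NormedSpace ℝ E] {ν : Measure α} [IsFiniteMeasure ν] {T : α → α}
    (hT : MeasurePreserving T ν ν) {g : α → E} (hg : Integrable g ν) {K : ℝ}
    (hK : ∀ m, ∀ᵐ x ∂ν, ‖birkhoffSum T g m x‖ ≤ K) : ∫ x, g x ∂ν = 0 := by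
  have hint (m : ℕ) : ∫ x, birkhoffSum T g m x ∂ν = m • ∫ x, g x ∂ν := by
    simp only [birkhoffSum]
    have hgi (i : ℕ) : Integrable (fun x ↦ g (T^[i] x)) ν :=
      (hT.iterate i).integrable_comp_of_integrable hg
    rw [integral_finsetSum _ fun i _ ↦ hgi i]
    refine (Finset.sum_congr rfl fun i _ ↦ ?_).trans (by rw [Finset.sum_const, Finset.card_range])
    have hi := hT.iterate i
    rw [← integral_map hi.aemeasurable (by rw [hi.map_eq]; exact hg.aestronglyMeasurable),
      hi.map_eq]
  by_contra hne
  obtain ⟨m, hm⟩ := exists_nat_gt (K * ν.real univ / ‖∫ x, g x ∂ν‖)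
  rw [div_lt_iff₀ (norm_pos_iff.2 hne)] at hm
  have hle := norm_integral_le_of_norm_le_const (hK m)
  rw [hint, ← Nat.cast_smul_eq_nsmul ℝ, norm_smul, Real.norm_natCast] at hle
  exact hle.not_gt hm

variable {ε ε' l c : ℝ} {u : ℤ → Fin 3} {τ : ℤ → ℤ × ℤ}

lemma measurable_letter3 (hl : l < 1) (ε c : ℝ) : Measurable (letter3 ε l c) :=
  (monotone_letter3 hl ε c).measurable

lemma measurable_T3 (hl : l < 1) (ε c : ℝ) : Measurable (T3 ε l c) := by
  rw [funext (T3_eq_add_evalAt_step ε l c)]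
  exact measurable_id.add ((measurable_of_finite fun a ↦ evalAt ε (step a)).comp
    (measurable_letter3 hl ε c))

lemma IsNondegenerate.measurePreserving_T3 (h : IsNondegenerate ε l) (c : ℝ) :
    MeasurePreserving (T3 ε l c) (volume.restrict (Ico c (c + l)))
      (volume.restrict (Ico c (c + l))) :=
  measurePreserving_restrict_of_injOn (v := fun a ↦ evalAt ε (step a))
    (measurable_letter3 h.lt_one ε c)
    (T3_eq_add_evalAt_step ε l c) (measurable_T3 h.lt_one ε c) measurableSet_Ico
    measure_Ico_lt_top.ne (h.mapsTo_T3 c) (h.injOn_T3 c)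

lemma IsNondegenerate.integral_letter3 (h : IsNondegenerate ε l) (c : ℝ) (g : Fin 3 → ℝ) :
    ∫ x in Ico c (c + l), g (letter3 ε l c x) =
      g 0 * (l - 1 + ε) + g 1 * (1 - l) + g 2 * (l - ε) := by
  obtain ⟨hε0, hε1⟩ := h.mem_Ioo
  obtain ⟨hl, hl', hl1⟩ := h
  have hm := measurable_letter3 hl1 ε c
  have hpre (a : Fin 3) : letter3 ε l c ⁻¹' {a} ∩ Ico c (c + l) =
      ![Ico c (c + l - 1 + ε), Ico (c + l - 1 + ε) (c + ε), Ico (c + ε) (c + l)] a := by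
    ext x
    fin_cases a <;>
      simp only [letter3, mem_inter_iff, mem_preimage, mem_singleton_iff, mem_Ico] <;>
      split_ifs <;> simp <;> grind
  rw [← integral_map (f := g) hm.aemeasurable
    (measurable_of_finite g).aestronglyMeasurable, integral_fintype .of_finite]
  simp only [map_measureReal_apply hm (measurableSet_singleton _),
    measureReal_restrict_apply (hm (measurableSet_singleton _)), hpre, Fin.sum_univ_three,
    Matrix.cons_val, smul_eq_mul]
  rw [Real.volume_real_Ico_of_le (by linarith), Real.volume_real_Ico_of_le (by linarith),
    Real.volume_real_Ico_of_le (by linarith)]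
  ring

-- A bounded cocycle has mean zero: transfer the bound to all orbits by right-density.
lemma IsLift.mean_eq_zero_of_abs_sum_le (hτ : IsLift ε l c u τ) (h : IsSturmExchange ε ε' l)
    {g : Fin 3 → ℝ} {K : ℝ} (hK : ∀ n m : ℕ, |∑ i ∈ Finset.range m, g (u (n + i))| ≤ K) :
    g 0 * (l - 1 + ε) + g 1 * (1 - l) + g 2 * (l - ε) = 0 := by
  rw [← h.integral_letter3 c]
  refine integral_eq_zero_of_norm_birkhoffSum_le (h.measurePreserving_T3 c) (K := K)
    (Integrable.of_finite.comp_measurable (measurable_letter3 h.lt_one ε c))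
    fun m ↦ (ae_restrict_iff' measurableSet_Ico).2 (.of_forall fun x hx ↦ ?_)
  obtain ⟨n, -, hn, -⟩ := hτ.exists_of_eventually_nhdsGE h hx
    (eventually_nhdsGE_itinerary_eq ε l c m x) one_pos 0
  refine (congrArg _ (Finset.sum_congr rfl fun i hi ↦ ?_)).trans_le (hK n m)
  rw [hτ.letter_add_natCast, hn i (Finset.mem_range.1 hi)]

end InvariantMeasure

section Cocycles

variable {ε ε' l c : ℝ} {u : ℤ → Fin 3} {τ : ℤ → ℤ × ℤ}

lemma exists_natCast_mul_eq_evalAt (x : ℝ) (p q : ℚ) :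
    ∃ D : ℕ, 0 < D ∧ ∃ s, D * (p + q * x) = evalAt x s := by
  refine ⟨p.den * q.den, Nat.mul_pos p.pos q.pos, (p.num * q.den, q.num * p.den), ?_⟩
  have hp : (p : ℝ) * p.den = p.num := by exact_mod_cast p.mul_den_eq_num
  have hq : (q : ℝ) * q.den = q.num := by exact_mod_cast q.mul_den_eq_num
  simp only [evalAt_apply, Int.cast_mul, Int.cast_natCast, Nat.cast_mul, ← hp, ← hq]
  ring

-- Take for `n` and `n + L` the places where `W` is extremal.
lemma exists_forall_eq_of_sub_eq {W : ℕ → ℤ} {K : ℤ} (hK : ∀ m, |W m| ≤ K) :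
    ∃ n L, ∀ m, W (m + L) - W m = W (n + L) - W n → W m = W n := by
  obtain ⟨_, ⟨n₁, rfl⟩, hmin⟩ := Int.exists_least_of_bdd (P := (· ∈ range W))
    ⟨-K, forall_mem_range.2 fun n ↦ (abs_le.1 (hK n)).1⟩ ⟨_, mem_range_self 0⟩
  obtain ⟨_, ⟨n₂, rfl⟩, hmax⟩ := Int.exists_greatest_of_bdd (P := (· ∈ range W))
    ⟨K, forall_mem_range.2 fun n ↦ (abs_le.1 (hK n)).2⟩ ⟨_, mem_range_self 0⟩
  rw [forall_mem_range] at hmin hmax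
  rcases le_total n₁ n₂ with h | h
  · obtain ⟨L, rfl⟩ := Nat.exists_eq_add_of_le h
    exact ⟨n₁, L, fun m hm ↦ by linarith [hmin m, hmax (m + L)]⟩
  · obtain ⟨L, rfl⟩ := Nat.exists_eq_add_of_le h
    exact ⟨n₂, L, fun m hm ↦ by linarith [hmax m, hmin (m + L)]⟩

namespace IsLift

lemma sum_step_add (hτ : IsLift ε l c u τ) (n : ℤ) (m : ℕ) :
    ∑ i ∈ Finset.range m, step (u (n + i)) = τ (n + m) - τ n := by
  simpa [hτ.succ, ← add_assoc] using Finset.sum_range_sub (fun i : ℕ ↦ τ (n + i)) m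

lemma sum_step (hτ : IsLift ε l c u τ) (m : ℕ) : ∑ i ∈ Finset.range m, step (u i) = τ m := by
  simpa [hτ.zero] using hτ.sum_step_add 0 m

lemma abs_evalAt_sub_le (hτ : IsLift ε l c u τ) (m n : ℤ) :
    |evalAt ε (τ m) - evalAt ε (τ n)| ≤ l := by
  obtain ⟨hm, hm'⟩ := hτ.mem m
  obtain ⟨hn, hn'⟩ := hτ.mem n
  rw [abs_le]
  constructor <;> linarith

-- Bounded integer sums are constant along the visits of some interval `[x, x + δ)`, and these
-- visits meet every class of `ℤ²` modulo `D`.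
lemma dvd_of_abs_sum_le (hτ : IsLift ε l c u τ) (h : IsSturmExchange ε ε' l) {w : Fin 3 → ℤ}
    {K : ℤ} (hK : ∀ m : ℕ, |∑ i ∈ Finset.range m, w (u i)| ≤ K) {D : ℕ} (hD : 0 < D)
    {χ : ℤ × ℤ →+ ℤ} (hw : ∀ a, w a ≡ χ (step a) [ZMOD D]) (s : ℤ × ℤ) : (D : ℤ) ∣ χ s := by
  set W : ℕ → ℤ := fun m ↦ ∑ i ∈ Finset.range m, w (u i)
  have hWχ (m : ℕ) : W m ≡ χ (τ m) [ZMOD D] := by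
    rw [← hτ.sum_step, map_sum]
    exact Int.ModEq.sum fun i _ ↦ hw _
  obtain ⟨n, L, hn⟩ := exists_forall_eq_of_sub_eq hK
  have hWn (s : ℤ × ℤ) : W n ≡ χ s [ZMOD D] := by
    obtain ⟨m, q, hm, hmq⟩ := hτ.exists_of_eventually_nhdsGE h (hτ.mem n)
      (eventually_nhdsGE_itinerary_eq ε l c L _) hD s
    have hWm : W m = W n := by
      refine hn m ?_
      simp only [Finset.sum_range_add, add_sub_cancel_left]
      refine Finset.sum_congr rfl fun i hi ↦ ?_
      rw [Nat.cast_add, Nat.cast_add, hτ.letter_add_natCast, hτ.letter_add_natCast,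
        hm i (Finset.mem_range.1 hi)]
    rw [← hWm]
    refine (hWχ m).trans (Int.modEq_iff_dvd.2 ⟨-χ q, ?_⟩)
    rw [hmq, map_add, map_nsmul, nsmul_eq_mul]
    ring
  exact Int.modEq_zero_iff_dvd.1 ((hWn s).symm.trans (by simpa using hWn 0))

lemma exists_abs_sum_le_of_mul_eq (hτ : IsLift ε l c u τ) {ψ : Fin 3 → ℝ} {K : ℝ}
    (hK : ∀ m : ℕ, |∑ i ∈ Finset.range m, ψ (u i)| ≤ K) {w : Fin 3 → ℤ} {γ δ κ : ℝ} (hγ : γ ≠ 0)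
    (hw : ∀ a, w a * γ = δ * ψ a + κ * evalAt ε (step a)) :
    ∃ N : ℤ, ∀ m : ℕ, |∑ i ∈ Finset.range m, w (u i)| ≤ N := by
  obtain ⟨N, hN⟩ := exists_int_gt ((|δ| * K + |κ| * l) / |γ|)
  rw [div_lt_iff₀ (abs_pos.2 hγ)] at hN
  refine ⟨N, fun m ↦ ?_⟩
  have hsum : (∑ i ∈ Finset.range m, w (u i) : ℤ) * γ =
      δ * ∑ i ∈ Finset.range m, ψ (u i) + κ * evalAt ε (τ m) := by
    rw [← hτ.sum_step, map_sum, Int.cast_sum, Finset.sum_mul, Finset.mul_sum, Finset.mul_sum,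
      ← Finset.sum_add_distrib]
    exact Finset.sum_congr rfl fun i _ ↦ hw _
  have hτm : |evalAt ε (τ m)| ≤ l := by simpa [hτ.zero] using hτ.abs_evalAt_sub_le m 0
  have hle : |((∑ i ∈ Finset.range m, w (u i) : ℤ) : ℝ)| * |γ| ≤ N * |γ| := by
    rw [← abs_mul, hsum]
    refine ((abs_add_le _ _).trans ?_).trans hN.le
    rw [abs_mul, abs_mul]
    gcongr
    exact hK m
  exact_mod_cast le_of_mul_le_mul_right hle (abs_pos.2 hγ)

-- Otherwise some combination of `ψ` and `a ↦ evalAt ε (step a)`, whose sums are bounded too, takes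
-- the integer values `w`, congruent modulo `D` to a homomorphism determined by `D l`.
lemma apply_one_eq_add_of_abs_sum_le (hτ : IsLift ε l c u τ) (h : IsSturmExchange ε ε' l)
    {p q : ℚ} (hlpq : l = p + q * ε) (hl : l ∉ Zbr ε) {ψ : Fin 3 → ℝ} {K : ℝ}
    (hK : ∀ n m : ℕ, |∑ i ∈ Finset.range m, ψ (u (n + i))| ≤ K) : ψ 1 = ψ 0 + ψ 2 := by
  have hmean := hτ.mean_eq_zero_of_abs_sum_le h hK
  obtain ⟨D, hD, ⟨P, Q⟩, hDl⟩ := exists_natCast_mul_eq_evalAt ε p q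
  rw [← hlpq, evalAt_apply] at hDl
  obtain ⟨γ, hγ⟩ : ∃ γ, γ = ψ 1 - ψ 0 - ψ 2 := ⟨_, rfl⟩
  by_contra hne
  have hγ0 : γ ≠ 0 := fun h0 ↦ hne (by linarith)
  set w : Fin 3 → ℤ := fun a ↦ D * (if a = 1 then 1 else 0) + (D - P) * (step a).2 + Q * (step a).1
  set κ : ℝ := γ * Q - D * (ψ 0 - ψ 2)
  have hw (a : Fin 3) : w a * γ = D * ψ a + κ * evalAt ε (step a) := by
    fin_cases a <;> simp [w, κ, step, evalAt_apply] <;> grind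
  obtain ⟨N, hN⟩ := hτ.exists_abs_sum_le_of_mul_eq (by simpa using hK 0) hγ0 hw
  have hdvd := hτ.dvd_of_abs_sum_le h hN hD
    (χ := Q • AddMonoidHom.fst ℤ ℤ - P • AddMonoidHom.snd ℤ ℤ) fun a ↦
      Int.modEq_iff_dvd.2 ⟨-(if a = 1 then 1 else 0) - (step a).2, by simp [w, -mul_ite]; ring⟩
  obtain ⟨b, hb⟩ : (D : ℤ) ∣ Q := by simpa using hdvd (1, 0)
  obtain ⟨a, ha⟩ : (D : ℤ) ∣ P := by simpa using hdvd (0, 1)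
  refine hl ⟨a, b, mul_left_cancel₀ (Nat.cast_ne_zero.2 hD.ne') (hDl.trans ?_)⟩
  simp only [ha, hb]
  push_cast
  ring

lemma eq_mul_evalAt_step_of_abs_sum_le (hτ : IsLift ε l c u τ) (h : IsSturmExchange ε ε' l)
    {p q : ℚ} (hlpq : l = p + q * ε) (hl : l ∉ Zbr ε) {ψ : Fin 3 → ℝ} {K : ℝ}
    (hK : ∀ n m : ℕ, |∑ i ∈ Finset.range m, ψ (u (n + i))| ≤ K) (a : Fin 3) :
    ψ a = (ψ 0 - ψ 2) * evalAt ε (step a) := by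
  have hmean := hτ.mean_eq_zero_of_abs_sum_le h hK
  have hone := hτ.apply_one_eq_add_of_abs_sum_le h hlpq hl hK
  rw [hone] at hmean
  fin_cases a <;> simp [evalAt_apply, step] <;> linarith

end IsLift

end Cocycles

section DilationsOfFixedPoints

variable {ε ε' l c μ Λ : ℝ} {f : ℤ × ℤ →+ ℤ × ℤ} {φ : Fin 3 → List (Fin 3)}
  {u : ℤ → Fin 3} {τ : ℤ → ℤ × ℤ} {k : ℤ → ℤ} {p q : ℚ}

/-- Every integral polynomial of degree at most two that vanishes at `ε` vanishes at `ε'`. For a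
quadratic irrational `ε` this says that `ε'` is `ε` or its conjugate. -/
def IsQuadraticConjugate (ε ε' : ℝ) : Prop :=
  ∀ a b c : ℤ, a * ε ^ 2 + b * ε + c = 0 → a * ε' ^ 2 + b * ε' + c = 0

lemma isQuadraticConjugate_of_eq_sub (hε : Irrational ε) {A B C : ℤ} (hA : A ≠ 0)
    (hquad : A * ε ^ 2 + B * ε + C = 0) (hε' : ε' = -B / A - ε) :
    IsQuadraticConjugate ε ε' := by
  intro a b c habc
  have hA' : (A : ℝ) ≠ 0 := Int.cast_ne_zero.2 hA
  have hsum : A * ε' = -B - A * ε := by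
    rw [hε', mul_sub, mul_div_cancel₀ _ hA']
  have hlin : ((A * c - a * C : ℤ) : ℚ) + ((A * b - a * B : ℤ) : ℚ) * ε = (0 : ℝ) := by
    push_cast
    linear_combination A * habc - a * hquad
  obtain ⟨hc, hb⟩ := eq_zero_of_ratCast_add_mul_eq_zero hε hlin
  have hc' : (A * c - a * C : ℝ) = 0 := by exact_mod_cast hc
  have hb' : (A * b - a * B : ℝ) = 0 := by exact_mod_cast hb
  refine mul_left_cancel₀ hA' ?_
  linear_combination a * (ε' - ε) * hsum + a * hquad + ε' * hb' + hc'

lemma IsQuadraticConjugate.evalAt_mul_evalAt (hconj : IsQuadraticConjugate ε ε') {m p q : ℤ × ℤ}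
    (h : evalAt ε m * evalAt ε p = evalAt ε q) : evalAt ε' m * evalAt ε' p = evalAt ε' q := by
  simp only [evalAt_apply] at h ⊢
  have hvanish := hconj (m.2 * p.2) (m.1 * p.2 + m.2 * p.1 - q.2) (m.1 * p.1 - q.1)
    (by push_cast; linear_combination h)
  push_cast at hvanish
  linear_combination hvanish

lemma IsQuadraticConjugate.isDilation (hconj : IsQuadraticConjugate ε ε') {m : ℤ × ℤ}
    (hf : ∀ p, evalAt ε (f p) = evalAt ε m * evalAt ε p) :
    IsDilation ε ε' (evalAt ε m) (evalAt ε' m) f :=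
  ⟨hf, fun p ↦ (hconj.evalAt_mul_evalAt (hf p).symm).symm⟩

lemma exists_addMonoidHom_evalAt_eq_mul {x μ : ℝ} {m n : ℤ × ℤ} (hm : evalAt x m = μ)
    (hn : evalAt x n = μ * x) :
    ∃ f : ℤ × ℤ →+ ℤ × ℤ, ∀ p, evalAt x (f p) = μ * evalAt x p := by
  refine ⟨(zmultiplesHom _ m).coprod (zmultiplesHom _ n), fun p ↦ ?_⟩
  rw [AddMonoidHom.coprod_apply, zmultiplesHom_apply, zmultiplesHom_apply, map_add, map_zsmul,
    map_zsmul, hm, hn, zsmul_eq_mul, zsmul_eq_mul, evalAt_apply]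
  ring

lemma IsDilation.eq_intCast (hf : IsDilation ε ε' μ Λ f) (hε : Irrational ε) {z : ℤ}
    (hμ : μ = z) : Λ = z := by
  have hfz : f (1, 0) = (z, 0) := evalAt_injective hε (by simp [hf.evalAt_map, evalAt_apply, hμ])
  simpa [hfz, evalAt_apply] using (hf.evalAt'_map (1, 0)).symm

lemma IsDilation.abs_le_one (hf : IsDilation ε ε' μ Λ f) (hτk : ∀ n, τ (k n) = f (τ n))
    (hτ : IsLift ε l c u τ) (h : IsSturmExchange ε ε' l) : |μ| ≤ 1 := by
  have hne : evalAt ε (τ 1) ≠ 0 := by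
    rw [map_ne_zero_iff _ (evalAt_injective h.irrational), ← hτ.zero]
    exact (hτ.injective h.neg).ne one_ne_zero
  have hbound (n : ℕ) : |μ| ^ n * |evalAt ε (τ 1)| ≤ l := by
    rw [← abs_pow, ← abs_mul, ← hf.evalAt_iterate, ← Function.Semiconj.iterate_right hτk n 1]
    simpa [hτ.zero] using hτ.abs_evalAt_sub_le (k^[n] 1) 0
  by_contra! hlt
  obtain ⟨n, hn⟩ := pow_unbounded_of_one_lt (l / |evalAt ε (τ 1)|) hlt
  rw [div_lt_iff₀ (abs_pos.2 hne)] at hn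
  exact (hbound n).not_gt hn

namespace IsCutting

lemma lift_apply_succ (hk : IsCutting φ u k) (hτ : IsLift ε l c u τ) (n : ℤ) :
    τ (k (n + 1)) = τ (k n) + ((φ (u n)).map step).sum := by
  rw [← (hk.occursAt n).sum_range, hτ.sum_step_add, hk.succ, add_sub_cancel]

-- The vectors `Φ a` have bounded sums along `u`, because the trajectory is bounded; hence they are
-- proportional to the vectors `step a`.
lemma exists_isDilation (hk : IsCutting φ u k) (hτ : IsLift ε l c u τ)
    (h : IsSturmExchange ε ε' l) (hconj : IsQuadraticConjugate ε ε') (hlpq : l = p + q * ε)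
    (hl : l ∉ Zbr ε) : ∃ μ Λ f, IsDilation ε ε' μ Λ f ∧ ∀ n, τ (k n) = f (τ n) := by
  set Φ : Fin 3 → ℤ × ℤ := fun a ↦ ((φ a).map step).sum
  have hsucc (n : ℤ) : τ (k (n + 1)) = τ (k n) + Φ (u n) := hk.lift_apply_succ hτ n
  have hsum (n m : ℕ) : ∑ i ∈ Finset.range m, evalAt ε (Φ (u (n + i))) =
      evalAt ε (τ (k (n + m))) - evalAt ε (τ (k n)) := by
    simpa [← add_assoc, hsucc] using
      Finset.sum_range_sub (fun i : ℕ ↦ evalAt ε (τ (k (n + i)))) m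
  have hlin : ∀ a, evalAt ε (Φ a) = evalAt ε (Φ 0 - Φ 2) * evalAt ε (step a) := by
    rw [map_sub]
    exact hτ.eq_mul_evalAt_step_of_abs_sum_le h hlpq hl
      fun n m ↦ (congrArg _ (hsum n m)).trans_le (hτ.abs_evalAt_sub_le _ _)
  obtain ⟨f, hf⟩ := exists_addMonoidHom_evalAt_eq_mul (m := Φ 0 - Φ 2) (n := -Φ 2) rfl
    (by rw [map_neg, hlin 2]; simp [step, evalAt_apply])
  have hfstep (a : Fin 3) : f (step a) = Φ a := evalAt_injective h.irrational (by rw [hf, hlin])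
  refine ⟨_, _, f, hconj.isDilation hf, fun n ↦ ?_⟩
  induction n using Int.induction_on with
  | zero => rw [hk.zero, hτ.zero, map_zero]
  | succ n ih => rw [hsucc, ih, hτ.succ, map_add, hfstep]
  | pred n ih =>
    have hk' := hsucc (-n - 1)
    have hτ' := hτ.succ (-n - 1)
    rw [sub_add_cancel] at hk' hτ'
    rw [ih, hτ', map_add, hfstep] at hk'
    exact (add_right_cancel hk').symm

lemma one_lt (hk : IsCutting φ u k) (hτk : ∀ n, τ (k n) = f (τ n))
    (hf : IsDilation ε ε' μ Λ f) (hτ : IsLift ε l c u τ) (hε' : ε' < 0)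
    (hφ : IsPrimitiveSubst φ) : 1 < Λ := by
  have hmono := hτ.strictMono hε'
  have hpos : 0 < evalAt ε' (τ 1) := by simpa [hτ.zero] using hmono one_pos
  have hΛ : 0 < Λ := by
    have hk1 : evalAt ε' (τ 0) < evalAt ε' (τ (k 1)) := hmono (hk.zero ▸ hk.strictMono one_pos)
    rw [hτk, hτ.zero, map_zero, hf.evalAt'_map] at hk1
    exact pos_of_mul_pos_left hk1 hpos.le
  obtain ⟨n, hn⟩ := exists_one_lt_length_of_isPrimitiveSubst hφ
  have hkn : 1 < k^[n] 1 := by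
    have hlen := (hk.iterate n).succ 0
    rw [(hk.iterate n).zero, zero_add, zero_add] at hlen
    exact hlen ▸ Nat.one_lt_cast.2 (hn _)
  have hΛn : evalAt ε' (τ 1) < Λ ^ n * evalAt ε' (τ 1) := by
    rw [← hf.evalAt'_iterate, ← Function.Semiconj.iterate_right hτk n 1]
    exact hmono hkn
  by_contra! hle
  exact (mul_le_of_le_one_left hpos.le (pow_le_one₀ hΛ.le hle)).not_gt hΛn

-- Passing to the square of the substitution makes the factor `μ` positive.
lemma exists_isHyperbolic (hk : IsCutting φ u k) (hφ : IsPrimitiveSubst φ)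
    (hτ : IsLift ε l c u τ) (h : IsSturmExchange ε ε' l) (hconj : IsQuadraticConjugate ε ε')
    (hlpq : l = p + q * ε) (hl : l ∉ Zbr ε) :
    ∃ μ Λ f, IsHyperbolic ε ε' μ Λ f ∧ Function.Surjective f ∧ HasEndpointAncestors ε l c μ := by
  obtain ⟨μ, Λ, f, hf, hτk⟩ := hk.exists_isDilation hτ h hconj hlpq hl
  have hΛ : 1 < Λ := hk.one_lt hτk hf hτ h.neg hφ
  have hμ0 : μ ≠ 0 := fun h0 ↦ by
    have hΛ0 : Λ = (0 : ℤ) := hf.eq_intCast h.irrational (by rw [h0, Int.cast_zero])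
    rw [Int.cast_zero] at hΛ0
    linarith
  have hμ1 : μ * μ < 1 := by
    refine (abs_le_one_iff_mul_self_le_one.1 (hf.abs_le_one hτk hτ h)).lt_of_ne fun h1 ↦ ?_
    have hΛ1 : Λ * Λ = (1 : ℤ) := (hf.comp hf).eq_intCast h.irrational (by rw [h1, Int.cast_one])
    rw [Int.cast_one] at hΛ1
    exact (one_lt_mul_of_lt_of_le hΛ hΛ.le).ne' hΛ1
  have hff : IsHyperbolic ε ε' (μ * μ) (Λ * Λ) (f.comp f) :=
    ⟨hf.comp hf, mul_self_pos.2 hμ0, hμ1, one_lt_mul_of_lt_of_le hΛ hΛ.le⟩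
  have hcoding := (hk.comp hk).isReturnCoding (fun n ↦ by
    rw [Function.comp_apply, hτk, hτk, AddMonoidHom.comp_apply]) hff.toIsDilation hff.pos h hτ
  have hsurj := hcoding.surjective hff h hτ.zero_mem hl
  exact ⟨_, _, _, hff, hsurj, hcoding.hasEndpointAncestors hff hsurj h hτ.zero_mem⟩

end IsCutting

lemma exists_isPrimitiveSubst_iff (hτ : IsLift ε l c u τ) (h : IsSturmExchange ε ε' l)
    (hconj : IsQuadraticConjugate ε ε') (hlpq : l = p + q * ε) (hl : l ∉ Zbr ε) :
    (∃ φ : Fin 3 → List (Fin 3), (∀ a, φ a ≠ []) ∧ IsPrimitiveSubst φ ∧ IsFixedPointSubstZ φ u) ↔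
      ∃ μ Λ f, IsHyperbolic ε ε' μ Λ f ∧ Function.Surjective f ∧
        HasEndpointAncestors ε l c μ := by
  simp only [isFixedPointSubstZ_iff]
  constructor
  · rintro ⟨φ, -, hφ, k, hk⟩
    exact hk.exists_isHyperbolic hφ hτ h hconj hlpq hl
  · rintro ⟨μ, Λ, f, hf, hsurj, hanc⟩
    obtain ⟨φ, hφ⟩ := hf.exists_isReturnCoding hsurj h hτ.zero_mem hanc
    obtain ⟨k, hk, hτk⟩ := hφ.exists_isCutting hf h hτ
    exact ⟨φ, hφ.ne_nil hf h.toIsNondegenerate h.neg, hk.isPrimitiveSubst hτk hf h hτ, k, hk⟩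

end DilationsOfFixedPoints

section UnitDilations

variable {ε ε' μ Λ : ℝ} {f : ℤ × ℤ →+ ℤ × ℤ} {r p q : ℚ}

/-- The determinant of two vectors of `ℤ²`, used to show that `μ * Λ` is the determinant of a
dilation with factors `μ` and `Λ`. -/
def cross (p q : ℤ × ℤ) : ℤ := p.1 * q.2 - q.1 * p.2

lemma cross_mul_sub (x y : ℝ) (p q : ℤ × ℤ) :
    cross p q * (y - x) = evalAt x p * evalAt y q - evalAt x q * evalAt y p := by
  simp only [cross, evalAt_apply]
  push_cast
  ring

lemma IsDilation.cross_map (hf : IsDilation ε ε' μ Λ f) (hne : ε' ≠ ε) (p q : ℤ × ℤ) :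
    (cross (f p) (f q) : ℝ) = μ * Λ * cross p q := by
  refine mul_right_cancel₀ (sub_ne_zero.2 hne) ?_
  rw [mul_assoc, cross_mul_sub, cross_mul_sub, hf.evalAt_map, hf.evalAt_map, hf.evalAt'_map,
    hf.evalAt'_map]
  ring

lemma IsDilation.mul_eq_one (hf : IsDilation ε ε' μ Λ f) (hsurj : Function.Surjective f)
    (hne : ε' ≠ ε) (hpos : 0 < μ * Λ) : μ * Λ = 1 := by
  have hdet : (cross (f (1, 0)) (f (0, 1)) : ℝ) = μ * Λ := by
    rw [hf.cross_map hne, cross]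
    norm_num
  obtain ⟨s, hs⟩ := hsurj (1, 0)
  obtain ⟨t, ht⟩ := hsurj (0, 1)
  have hinv : cross (f (1, 0)) (f (0, 1)) * cross s t = 1 := by
    have hst := hf.cross_map hne s t
    rw [hs, ht, ← hdet] at hst
    exact_mod_cast hst.symm
  rw [← hdet] at hpos ⊢
  rw [Int.eq_one_of_mul_eq_one_right (Int.cast_pos.1 hpos).le hinv, Int.cast_one]

lemma IsDilation.exists_add_eq_intCast (hf : IsDilation ε ε' μ Λ f) (hne : ε' ≠ ε) :
    ∃ m : ℤ, Λ + μ = m := by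
  have h₁ := hf.evalAt_map (1, 0)
  have h₁' := hf.evalAt'_map (1, 0)
  have h₂ := hf.evalAt_map (0, 1)
  have h₂' := hf.evalAt'_map (0, 1)
  simp only [evalAt_apply, Int.cast_one, Int.cast_zero] at h₁ h₁' h₂ h₂'
  refine ⟨(f (1, 0)).1 + (f (0, 1)).2, mul_right_cancel₀ (sub_ne_zero.2 hne.symm) ?_⟩
  push_cast
  linear_combination ε' * h₁ - ε * h₁' - h₂ + h₂'

lemma IsDilation.exists_ratCast_add_mul (hf : IsDilation ε ε' μ Λ f) (hr : ε + ε' = r) :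
    ∃ p q : ℚ, p + q * ε = Λ ∧ p + q * ε' = μ := by
  have h := hf.evalAt_map (1, 0)
  have h' := hf.evalAt'_map (1, 0)
  simp only [evalAt_apply, Int.cast_one, Int.cast_zero] at h h'
  refine ⟨(f (1, 0)).1 + (f (1, 0)).2 * r, -(f (1, 0)).2, ?_, ?_⟩
  · push_cast
    linear_combination h' - (f (1, 0)).2 * hr
  · push_cast
    linear_combination h - (f (1, 0)).2 * hr

lemma IsDilation.surjective_iff_image_mul_Zbr (hf : IsDilation ε ε' μ Λ f) (hε : Irrational ε)
    (hμΛ : μ * Λ = 1) : Function.Surjective f ↔ (fun z ↦ Λ * z) '' Zbr ε = Zbr ε := by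
  have hinv (s : ℤ × ℤ) : Λ * evalAt ε (f s) = evalAt ε s := by
    rw [hf.evalAt_map, ← mul_assoc, mul_comm Λ, hμΛ, one_mul]
  rw [Zbr_eq_range_evalAt]
  constructor
  · intro hsurj
    nth_rw 1 [← hsurj.range_comp]
    rw [← range_comp]
    exact congrArg range (funext hinv)
  · intro hC1 s
    obtain ⟨t, ht⟩ := hC1.subset ⟨_, mem_range_self s, rfl⟩
    refine ⟨t, evalAt_injective hε ?_⟩
    rw [hf.evalAt_map, ht, ← mul_assoc, hμΛ, one_mul]

lemma evalAt_eq_of_evalAt_eq (hε : Irrational ε) (hr : ε + ε' = r) {m : ℤ × ℤ}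
    (hm : evalAt ε m = p + q * ε') : evalAt ε' m = p + q * ε := by
  rw [evalAt_apply] at hm ⊢
  have hlin : ((m.1 - p - q * r : ℚ) : ℝ) + (m.2 + q : ℚ) * ε = 0 := by
    push_cast
    linear_combination hm + q * hr
  obtain ⟨h₁, h₂⟩ := eq_zero_of_ratCast_add_mul_eq_zero hε hlin
  have h₁' : (m.1 - p - q * r : ℝ) = 0 := by exact_mod_cast h₁
  have h₂' : (m.2 + q : ℝ) = 0 := by exact_mod_cast h₂
  linear_combination h₁' + ε' * h₂' - q * hr

lemma exists_isDilation_of_image_mul_Zbr (hε : Irrational ε) (hconj : IsQuadraticConjugate ε ε')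
    (hr : ε + ε' = r) (hmul : (p + q * ε) * (p + q * ε') = 1)
    (hC1 : (fun z ↦ (p + q * ε) * z) '' Zbr ε = Zbr ε) :
    ∃ f, IsDilation ε ε' (p + q * ε') (p + q * ε) f := by
  have hinv (s : ℤ × ℤ) : ∃ t, evalAt ε t = (p + q * ε') * evalAt ε s := by
    rw [Zbr_eq_range_evalAt] at hC1
    obtain ⟨-, ⟨t, rfl⟩, ht⟩ := hC1.superset (mem_range_self s)
    refine ⟨t, ?_⟩
    rw [← ht, ← mul_assoc, mul_comm (p + q * ε'), hmul, one_mul]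
  obtain ⟨m, hm⟩ := hinv (1, 0)
  obtain ⟨n, hn⟩ := hinv (0, 1)
  rw [show evalAt ε (1, 0) = 1 by simp [evalAt_apply], mul_one] at hm
  rw [show evalAt ε (0, 1) = ε by simp [evalAt_apply]] at hn
  obtain ⟨f, hf⟩ := exists_addMonoidHom_evalAt_eq_mul hm hn
  rw [← evalAt_eq_of_evalAt_eq hε hr hm, ← hm]
  exact ⟨f, hconj.isDilation (by rwa [hm])⟩

end UnitDilations

end ThreeIet

theorem threeIet_subst_invariant_iff_unit_general (ε ε' : ℝ) (A B C : ℤ) (hA : A ≠ 0)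
    (hε : Irrational ε) (hquad : (A : ℝ) * ε ^ 2 + (B : ℝ) * ε + (C : ℝ) = 0)
    (hε' : ε' = -(B : ℝ) / (A : ℝ) - ε) (hneg : ε' < 0) (l c : ℝ) (p₂ q₂ : ℚ)
    (hlQ : l = (p₂ : ℝ) + (q₂ : ℝ) * ε) (hl₁ : max ε (1 - ε) < l) (hl₂ : l < 1)
    (hnd : l ∉ Zbr ε) (u : ℤ → Fin 3) (hu : IsThreeIetWord ε l c u) :
    (∃ φ : Fin 3 → List (Fin 3), (∀ a, φ a ≠ []) ∧ IsPrimitiveSubst φ ∧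
        IsFixedPointSubstZ φ u) ↔
    ∃ p q : ℚ, 1 < p + q * ε ∧ p + q * ε' ∈ Set.Ioo (0 : ℝ) 1 ∧
      ((p + q * ε) * (p + q * ε') = 1 ∨ (p + q * ε) * (p + q * ε') = -1) ∧
      (∃ m : ℤ, (p + q * ε) + (p + q * ε') = m) ∧
      (fun z ↦ (p + q * ε) * z) '' Zbr ε = Zbr ε ∧
      ThreeIet.HasEndpointAncestors ε l c (p + q * ε') := by
  obtain ⟨hεl, hεl'⟩ := max_lt_iff.1 hl₁
  have hr : ε + ε' = ((-B / A : ℚ) : ℝ) := by push_cast; linarith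
  have hirr : Irrational ε' := by
    rw [← eq_sub_iff_add_eq'] at hr
    exact hr ▸ hε.ratCast_sub _
  have hconj := ThreeIet.isQuadraticConjugate_of_eq_sub hε hA hquad hε'
  have h : ThreeIet.IsSturmExchange ε ε' l := ⟨⟨hεl, hεl', hl₂⟩, hirr, hneg, hε⟩
  obtain ⟨τ, hτ⟩ := ThreeIet.exists_isLift hε hu
  rw [ThreeIet.exists_isPrimitiveSubst_iff hτ h hconj hlQ hnd]
  constructor
  · rintro ⟨μ, Λ, f, hf, hsurj, hanc⟩
    have hμΛ := hf.mul_eq_one hsurj h.ne (mul_pos hf.pos (one_pos.trans hf.one_lt))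
    obtain ⟨p, q, rfl, rfl⟩ := hf.exists_ratCast_add_mul hr
    exact ⟨p, q, hf.one_lt, ⟨hf.pos, hf.lt_one⟩, .inl ((mul_comm _ _).trans hμΛ),
      hf.exists_add_eq_intCast h.ne, (hf.surjective_iff_image_mul_Zbr hε hμΛ).1 hsurj, hanc⟩
  · rintro ⟨p, q, hΛ, ⟨hμ, hμ1⟩, hmul, -, hC1, hanc⟩
    replace hmul := hmul.resolve_right (by nlinarith)
    obtain ⟨f, hf⟩ := ThreeIet.exists_isDilation_of_image_mul_Zbr hε hconj hr hmul hC1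
    exact ⟨_, _, f, ⟨hf, hμ, hμ1, hΛ⟩,
      (hf.surjective_iff_image_mul_Zbr hε ((mul_comm _ _).trans hmul)).2 hC1, hanc⟩

theorem threeIet_subst_invariant_iff_unit (ε : ℝ) (A B C : ℤ) (hA : A ≠ 0)
    (hε : Irrational ε) (hεm : ε ∈ Set.Ioo (0 : ℝ) 1)
    (hquad : (A : ℝ) * ε ^ 2 + (B : ℝ) * ε + (C : ℝ) = 0)
    (hconj : -(B : ℝ) / (A : ℝ) - ε < 0)
    (l c : ℝ) (p₁ q₁ p₂ q₂ : ℚ)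
    (hcQ : c = (p₁ : ℝ) + (q₁ : ℝ) * ε) (hlQ : l = (p₂ : ℝ) + (q₂ : ℝ) * ε)
    (hl₁ : max ε (1 - ε) < l) (hl₂ : l < 1) (hc₁ : c ≤ 0) (hc₂ : 0 < c + l)
    (hnd : l ∉ Zbr ε) (u : ℤ → Fin 3) (hu : IsThreeIetWord ε l c u) :
    (∃ φ : Fin 3 → List (Fin 3), (∀ a, φ a ≠ []) ∧ IsPrimitiveSubst φ ∧
        IsFixedPointSubstZ φ u) ↔
    ∃ p q : ℚ,
      1 < (p : ℝ) + (q : ℝ) * ε ∧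
      (p : ℝ) + (q : ℝ) * (-(B : ℝ) / (A : ℝ) - ε) ∈ Set.Ioo (0 : ℝ) 1 ∧
      (((p : ℝ) + (q : ℝ) * ε) * ((p : ℝ) + (q : ℝ) * (-(B : ℝ) / (A : ℝ) - ε)) = 1 ∨
       ((p : ℝ) + (q : ℝ) * ε) * ((p : ℝ) + (q : ℝ) * (-(B : ℝ) / (A : ℝ) - ε)) = -1) ∧
      (∃ m : ℤ, ((p : ℝ) + (q : ℝ) * ε) + ((p : ℝ) + (q : ℝ) * (-(B : ℝ) / (A : ℝ) - ε))
        = (m : ℝ)) ∧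
      -- C1
      (fun z => ((p : ℝ) + (q : ℝ) * ε) * z) '' Zbr ε = Zbr ε ∧
      -- C2 : with J = Λ'[c, c+l), the ancestors of c+ε and c+l−(1−ε) in J exist and
      -- belong to {Λ'c, Λ'(c+ε), Λ'(c+l−(1−ε))}
      (let Λ' : ℝ := (p : ℝ) + (q : ℝ) * (-(B : ℝ) / (A : ℝ) - ε)
       let J : Set ℝ := Set.Ico (Λ' * c) (Λ' * (c + l))
       (∃ z, IsAncestor ε l c J (c + ε) z ∧
          z ∈ ({Λ' * c, Λ' * (c + ε), Λ' * (c + l - (1 - ε))} : Set ℝ)) ∧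
       (∃ z, IsAncestor ε l c J (c + l - (1 - ε)) z ∧
          z ∈ ({Λ' * c, Λ' * (c + ε), Λ' * (c + l - (1 - ε))} : Set ℝ))) := by
  rw [threeIet_subst_invariant_iff_unit_general ε _ A B C hA hε hquad rfl hconj l c p₂ q₂ hlQ
    hl₁ hl₂ hnd u hu]
  simp only [ThreeIet.hasEndpointAncestors_iff]
end

section
/- Let A, B, C be integers with A ≠ 0 and let ε be an irrational real number with Aε² + Bε + C = 0, and set ε′ := −B/A − ε. Then there exist rationals p, q such that, writing Λ := p + qε and Λ′ := p + qε′, one has Λ > 1, Λ′ ∈ (0,1), Λ·Λ′ = 1, Λ + Λ′ ∈ ℤ, and Λ·ℤ[ε] = ℤ[ε]; that is, there exists a quadratic unit Λ ∈ ℚ(ε) with Λ > 1, conjugate Λ′ ∈ (0,1), and Λ·ℤ[ε] = ℤ[ε]. -/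
/-!
The order `ℤ[Aε]` acts on `ℤ[ε]` by multiplication, because `Aε² = -Bε - C`; hence its elements of
norm one preserve `ℤ[ε]`. The order contains `ℤ[√D]`, where `√D = ±(2Aε + B)` and
`D = B² - 4AC` is positive and not a square, so Pell's equation `x² - D y² = 1` supplies an element
of norm one greater than `1`.
-/

lemma not_isSquare_of_irrational_of_sq_eq {s : ℝ} {d : ℤ} (hs : Irrational s)
    (hsd : s ^ 2 = d) : ¬ IsSquare d := by
  rintro ⟨r, rfl⟩
  have hsr : s ^ 2 = (r : ℝ) ^ 2 := by rw [hsd, Int.cast_mul, sq]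
  rcases sq_eq_sq_iff_eq_or_eq_neg.mp hsr with h | h
  · exact hs.ne_int r h
  · exact hs.ne_int (-r) (by rw [h, Int.cast_neg])

lemma exists_one_lt_pell_unit {s : ℝ} {d : ℤ} (hs : Irrational s) (hsd : s ^ 2 = d) :
    ∃ x y : ℤ, 1 < (x : ℝ) + y * s ∧ ((x : ℝ) + y * s) * (x - y * s) = 1 := by
  have hd : 0 < d := by
    have : (0 : ℝ) < d := hsd ▸ sq_pos_of_ne_zero hs.ne_zero
    exact_mod_cast this
  obtain ⟨a, hx, hy⟩ :=
    Pell.Solution₁.exists_pos_of_not_isSquare hd (not_isSquare_of_irrational_of_sq_eq hs hsd)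
  have hx' : (1 : ℝ) < a.x := by exact_mod_cast hx
  have hy' : (0 : ℝ) < a.y := by exact_mod_cast hy
  have hnorm : (a.x : ℝ) ^ 2 - d * (a.y : ℝ) ^ 2 = 1 := by exact_mod_cast a.prop
  rcases hs.ne_zero.lt_or_gt with hneg | hpos
  · refine ⟨a.x, -a.y, ?_, ?_⟩ <;> push_cast
    · linarith [mul_neg_of_pos_of_neg hy' hneg]
    · linear_combination hnorm - (a.y : ℝ) ^ 2 * hsd
  · refine ⟨a.x, a.y, ?_, ?_⟩
    · linarith [mul_pos hy' hpos]
    · linear_combination hnorm - (a.y : ℝ) ^ 2 * hsd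

section QuadraticOrder

variable {ε : ℝ} {A B C : ℤ}

lemma mapsTo_mul_Zbr (hquad : (A : ℝ) * ε ^ 2 + (B : ℝ) * ε + (C : ℝ) = 0) (n m : ℤ) :
    Set.MapsTo (fun z => ((n : ℝ) + m * (A * ε)) * z) (Zbr ε) (Zbr ε) := by
  rintro _ ⟨a, b, rfl⟩
  refine ⟨n * a - m * b * C, n * b + m * (a * A - b * B), ?_⟩
  push_cast
  linear_combination (m * b : ℝ) * hquad

-- The second factor in `hnorm` is the conjugate of the first, since `Aε' = -B - Aε`.
lemma image_mul_Zbr_of_norm_eq_one (hquad : (A : ℝ) * ε ^ 2 + (B : ℝ) * ε + (C : ℝ) = 0)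
    {n m : ℤ} (hnorm : ((n : ℝ) + m * (A * ε)) * (n + m * (-B - A * ε)) = 1) :
    (fun z => ((n : ℝ) + m * (A * ε)) * z) '' Zbr ε = Zbr ε := by
  have hconj : ((n - m * B : ℤ) : ℝ) + (-m : ℤ) * (A * ε) = n + m * (-B - A * ε) := by
    push_cast
    ring
  have hinv : Set.MapsTo (fun z => ((n : ℝ) + m * (-B - A * ε)) * z) (Zbr ε) (Zbr ε) :=
    hconj ▸ mapsTo_mul_Zbr hquad (n - m * B) (-m)
  refine (Set.InvOn.bijOn ⟨fun z _ => ?_, fun z _ => ?_⟩ (mapsTo_mul_Zbr hquad n m) hinv).image_eq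
  · linear_combination z * hnorm
  · linear_combination z * hnorm

lemma exists_one_lt_norm_eq_one (hA : A ≠ 0) (hε : Irrational ε)
    (hquad : (A : ℝ) * ε ^ 2 + (B : ℝ) * ε + (C : ℝ) = 0) :
    ∃ n m : ℤ, 1 < (n : ℝ) + m * (A * ε) ∧
      ((n : ℝ) + m * (A * ε)) * (n + m * (-B - A * ε)) = 1 := by
  have hirr : Irrational (2 * A * ε + B) := by
    exact_mod_cast (hε.intCast_mul (mul_ne_zero two_ne_zero hA)).add_intCast B
  have hdiscrim : (2 * A * ε + B) ^ 2 = (discrim A B C : ℤ) := by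
    rw [← discrim_eq_sq_of_quadratic_eq_zero (sq ε ▸ hquad)]
    simp only [discrim]
    push_cast
    rfl
  obtain ⟨x, y, hgt, hnorm⟩ := exists_one_lt_pell_unit hirr hdiscrim
  refine ⟨x + y * B, 2 * y, ?_, ?_⟩ <;> push_cast
  · linear_combination hgt
  · linear_combination hnorm

end QuadraticOrder

theorem exists_unit_preserving_Zbr (ε : ℝ) (A B C : ℤ) (hA : A ≠ 0)
    (hε : Irrational ε) (hquad : (A : ℝ) * ε ^ 2 + (B : ℝ) * ε + (C : ℝ) = 0) :
    ∃ p q : ℚ,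
      1 < (p : ℝ) + (q : ℝ) * ε ∧
      (p : ℝ) + (q : ℝ) * (-(B : ℝ) / (A : ℝ) - ε) ∈ Set.Ioo (0 : ℝ) 1 ∧
      ((p : ℝ) + (q : ℝ) * ε) * ((p : ℝ) + (q : ℝ) * (-(B : ℝ) / (A : ℝ) - ε)) = 1 ∧
      (∃ m : ℤ, ((p : ℝ) + (q : ℝ) * ε) + ((p : ℝ) + (q : ℝ) * (-(B : ℝ) / (A : ℝ) - ε))
        = (m : ℝ)) ∧
      (fun z => ((p : ℝ) + (q : ℝ) * ε) * z) '' Zbr ε = Zbr ε := by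
  obtain ⟨n, m, hgt, hnorm⟩ := exists_one_lt_norm_eq_one hA hε hquad
  have hA' : (A : ℝ) ≠ 0 := Int.cast_ne_zero.mpr hA
  have hunit : ((n : ℚ) : ℝ) + ((m * A : ℚ) : ℝ) * ε = n + m * (A * ε) := by
    push_cast
    ring
  have hconj : ((n : ℚ) : ℝ) + ((m * A : ℚ) : ℝ) * (-(B : ℝ) / (A : ℝ) - ε) =
      n + m * (-B - A * ε) := by
    push_cast
    field_simp
  have hconj_mem : (n : ℝ) + m * (-B - A * ε) ∈ Set.Ioo (0 : ℝ) 1 := by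
    rw [eq_inv_of_mul_eq_one_right hnorm]
    exact ⟨inv_pos.mpr (one_pos.trans hgt), inv_lt_one_of_one_lt₀ hgt⟩
  refine ⟨n, m * A, ?_⟩
  rw [hunit, hconj]
  refine ⟨hgt, hconj_mem, hnorm, ⟨2 * n - m * B, ?_⟩, image_mul_Zbr_of_norm_eq_one hquad hnorm⟩
  push_cast
  ring
end

section
/- Let ε ∈ (0,1) be a quadratic irrational (a Sturm number) whose conjugate satisfies ε′ < 0. Let q ≥ 1 be an integer and let l, c satisfy max(ε, 1−ε) < l < 1, c ≤ 0 < c + l, and q·l ∈ ℤ[ε], q·c ∈ ℤ[ε]. Let Λ = p + rε (p, r ∈ ℚ) with conjugate Λ′ = p + rε′ satisfy: Λ·Λ′ ∈ {1, −1}, Λ + Λ′ ∈ ℤ, Λ > 1, Λ′ ∈ (0,1), Λ·ℤ[ε] = ℤ[ε], and Λ′·((i + jε)/q + ℤ[ε]) = (i + jε)/q + ℤ[ε] for all integers i, j. Let T be the associated exchange of three intervals on [c, c+l) and J := [Λ′c, Λ′(c+l)). Then for every z₀ ∈ (1/q)·ℤ[ε] ∩ [c, c+l): the point Λ′z₀ is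 the ancestor of z₀ in J if and only if z₀′ ≤ 0 ≤ (T(z₀))′, where for z = s + tε (s, t ∈ ℚ) one writes z′ = s + tε′, and (T(z₀))′ equals z₀′ + 1 − ε′, z₀′ + 1 − 2ε′, or z₀′ − ε′ according as z₀ ∈ [c, c+l−1+ε), [c+l−1+ε, c+ε), or [c+ε, c+l). -/
/-!
Replace each `x = s + t * ε` by the pair `(x, x')` and let `L` be the lattice of the pairs `(w, w')`
with `w ∈ ℤ[ε]`. Since `ε' < 0 < ε < 1`, a vector of `L` whose first coordinate lies in `(-1, 1)`
and whose second one is nonnegative is a combination of `(1 - ε, 1 - ε')` and `(-ε, -ε')` with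
coefficients in `ℕ`. The shortest admissible combination is exactly the one used by `T`, so `T` maps
a point of a coset of `L` with first coordinate in `[c, c + l)` to the one with the next larger
second coordinate, and orbits are ordered by conjugates. Thus `Λ' * z` is the ancestor of `z` in
`J = Λ' * [c, c + l)` if and only if `Λ * z' ≤ z'` and no point of the coset over `J` has its
conjugate in `(Λ * z', z']`. Dividing such a point by `Λ'` gives a point over `[c, c + l)`
with conjugate in `(z', Λ' * z']`, and the first candidate for it is `T z`. It is too late if
`(T z)' ≥ 0`; if `(T z)' < 0`, then `Λ' * T z` lies over `[c, c + l)` and its conjugate is below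
that of `T z`, hence at most `z'`, so that `(T z)' ≤ Λ' * z'` and it does occur.
-/

/-- The `R`-span of `1` and `(ε, ε')` in `ℝ × ℝ`. When `ε'` is the conjugate of `ε`, this is the set
of pairs `(x, x')` of conjugate numbers with `x ∈ ℤ[ε]` (for `R = ℤ`) or `x ∈ ℚ(ε)` (for `R = ℚ`);
the product of `ℝ × ℝ` makes conjugation multiplicative. -/
def conjSpan (R : Type*) [Semiring R] [Module R ℝ] (ε ε' : ℝ) : Submodule R (ℝ × ℝ) :=
  Submodule.span R {1, (ε, ε')}

/-- The conjugate `(T x)'` of the image of `x` under `T = T3 ε l c`, as a function of `x` and of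
its conjugate `x'`. -/
noncomputable def conjT3 (ε ε' l c x x' : ℝ) : ℝ :=
  if x < c + l - 1 + ε then x' + 1 - ε'
  else if x < c + ε then x' + 1 - 2 * ε'
  else x' - ε'

/-- The lift `(x, x') ↦ (T x, (T x)')` of the exchange `T = T3 ε l c` to pairs of conjugates. -/
noncomputable def T3Lift (ε ε' l c : ℝ) (X : ℝ × ℝ) : ℝ × ℝ :=
  (T3 ε l c X.1, conjT3 ε ε' l c X.1 X.2)

section

variable {ε ε' l c : ℝ} {X Y : ℝ × ℝ}

lemma mem_conjSpan_int_iff :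
    X ∈ conjSpan ℤ ε ε' ↔ ∃ a b : ℤ, X = (a + b * ε, a + b * ε') := by
  simp [conjSpan, Submodule.mem_span_pair, Prod.ext_iff, eq_comm]

lemma mem_conjSpan_rat_iff :
    X ∈ conjSpan ℚ ε ε' ↔ ∃ s t : ℚ, X = (s + t * ε, s + t * ε') := by
  simp [conjSpan, Submodule.mem_span_pair, Prod.ext_iff, eq_comm, Rat.smul_def]

lemma mem_conjSpan_rat_of_int (hX : X ∈ conjSpan ℤ ε ε') : X ∈ conjSpan ℚ ε ε' := by
  obtain ⟨a, b, rfl⟩ := mem_conjSpan_int_iff.1 hX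
  exact mem_conjSpan_rat_iff.2 ⟨a, b, by simp⟩

lemma eq_zero_of_mem_conjSpan_rat_of_fst_eq_zero (hε : Irrational ε)
    (hX : X ∈ conjSpan ℚ ε ε') (hX₁ : X.1 = 0) : X = 0 := by
  obtain ⟨s, t, rfl⟩ := mem_conjSpan_rat_iff.1 hX
  obtain rfl : t = 0 := by
    by_contra ht
    exact (hε.ratCast_mul ht).ratCast_add s |>.ne_zero hX₁
  simp_all

lemma eq_of_sub_mem_conjSpan_rat_of_fst_eq (hε : Irrational ε)
    (hXY : X - Y ∈ conjSpan ℚ ε ε') (h₁ : X.1 = Y.1) : X = Y :=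
  sub_eq_zero.1 <| eq_zero_of_mem_conjSpan_rat_of_fst_eq_zero hε hXY (sub_eq_zero.2 h₁)

lemma mem_conjSpan_int_of_fst_mem_Zbr (hε : Irrational ε)
    (hX : X ∈ conjSpan ℚ ε ε') (hX₁ : X.1 ∈ Zbr ε) : X ∈ conjSpan ℤ ε ε' := by
  obtain ⟨a, b, hab⟩ := hX₁
  have hY : ((a + b * ε, a + b * ε') : ℝ × ℝ) ∈ conjSpan ℤ ε ε' :=
    mem_conjSpan_int_iff.2 ⟨a, b, rfl⟩
  rwa [eq_of_sub_mem_conjSpan_rat_of_fst_eq hε (sub_mem hX (mem_conjSpan_rat_of_int hY)) hab]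

lemma fst_mem_Zbr (hX : X ∈ conjSpan ℤ ε ε') : X.1 ∈ Zbr ε := by
  obtain ⟨a, b, rfl⟩ := mem_conjSpan_int_iff.1 hX
  exact ⟨a, b, rfl⟩

lemma mul_mem_conjSpan_rat {u v : ℚ} (hadd : ε + ε' = u) (hmul : ε * ε' = v)
    (hX : X ∈ conjSpan ℚ ε ε') (hY : Y ∈ conjSpan ℚ ε ε') : X * Y ∈ conjSpan ℚ ε ε' := by
  obtain ⟨s, t, rfl⟩ := mem_conjSpan_rat_iff.1 hX
  obtain ⟨s', t', rfl⟩ := mem_conjSpan_rat_iff.1 hY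
  refine mem_conjSpan_rat_iff.2 ⟨s * s' - t * t' * v, s * t' + t * s' + t * t' * u, ?_⟩
  ext <;> push_cast [← hadd, ← hmul] <;> simp only [Prod.mk_mul_mk] <;> ring

lemma swap_mem_conjSpan_rat {u : ℚ} (hadd : ε + ε' = u) (hX : X ∈ conjSpan ℚ ε ε') :
    X.swap ∈ conjSpan ℚ ε ε' := by
  obtain ⟨s, t, rfl⟩ := mem_conjSpan_rat_iff.1 hX
  refine mem_conjSpan_rat_iff.2 ⟨s + t * u, -t, ?_⟩
  ext <;> push_cast [← hadd] <;> simp only [Prod.swap_prod_mk] <;> ring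

lemma mul_mem_conjSpan_int {u v : ℚ} (hε : Irrational ε) (hadd : ε + ε' = u) (hmul : ε * ε' = v)
    (hX : X ∈ conjSpan ℚ ε ε') (hXZ : Set.MapsTo (X.1 * ·) (Zbr ε) (Zbr ε))
    (hY : Y ∈ conjSpan ℤ ε ε') : X * Y ∈ conjSpan ℤ ε ε' :=
  mem_conjSpan_int_of_fst_mem_Zbr hε
    (mul_mem_conjSpan_rat hadd hmul hX (mem_conjSpan_rat_of_int hY)) (hXZ (fst_mem_Zbr hY))

lemma exists_nat_combination_of_mem_conjSpan_int (hε₀₁ : ε ∈ Set.Ioo 0 1) (hε' : ε' < 0)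
    (hX : X ∈ conjSpan ℤ ε ε') (hX₁ : |X.1| < 1) (hX₂ : 0 ≤ X.2) :
    ∃ m n : ℕ, X = (m * (1 - ε) - n * ε, m * (1 - ε') - n * ε') := by
  obtain ⟨hε₀, hε₁⟩ := hε₀₁
  obtain ⟨a, b, rfl⟩ := mem_conjSpan_int_iff.1 hX
  obtain ⟨n, rfl⟩ : ∃ n : ℤ, b = -a - n := ⟨-a - b, by ring⟩
  have hfst : |a * (1 - ε) - n * ε| < 1 := by convert hX₁ using 2; push_cast; ring
  have hsnd : 0 ≤ a * (1 - ε') - n * ε' := by convert hX₂ using 1; push_cast; ring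
  obtain ⟨hlo, hhi⟩ := abs_lt.1 hfst
  have ha : 0 ≤ a := by
    by_contra! ha
    have ha' : (a : ℝ) ≤ -1 := by exact_mod_cast Int.le_sub_one_of_lt ha
    have hn : (0 : ℝ) < n := by nlinarith
    have hnε : ε ≤ n * ε := le_mul_of_one_le_left hε₀.le (by exact_mod_cast hn)
    nlinarith
  have hn : 0 ≤ n := by
    by_contra! hn
    have hn' : (n : ℝ) ≤ -1 := by exact_mod_cast Int.le_sub_one_of_lt hn
    have ha : (0 : ℝ) < a := by nlinarith
    have haε : 1 - ε ≤ a * (1 - ε) :=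
      le_mul_of_one_le_left (sub_nonneg.2 hε₁.le) (by exact_mod_cast ha)
    nlinarith
  lift a to ℕ using ha
  lift n to ℕ using hn
  refine ⟨a, n, ?_⟩
  ext <;> push_cast <;> ring

lemma mem_Ioo_of_max_lt (hl₁ : max ε (1 - ε) < l) (hl₂ : l < 1) : ε ∈ Set.Ioo 0 1 := by
  obtain ⟨hεl, hεl'⟩ := max_lt_iff.1 hl₁
  constructor <;> linarith

lemma mapsTo_T3 (hl₁ : max ε (1 - ε) < l) (hl₂ : l < 1) :
    Set.MapsTo (T3 ε l c) (Set.Ico c (c + l)) (Set.Ico c (c + l)) := by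
  obtain ⟨hεl, hεl'⟩ := max_lt_iff.1 hl₁
  rintro x ⟨hx₁, hx₂⟩
  unfold T3
  split_ifs <;> constructor <;> linarith

lemma T3Lift_sub_mem_conjSpan : T3Lift ε ε' l c X - X ∈ conjSpan ℤ ε ε' := by
  unfold T3Lift T3 conjT3
  split_ifs
  · refine mem_conjSpan_int_iff.2 ⟨1, -1, ?_⟩
    ext <;> simp only [Prod.fst_sub, Prod.snd_sub] <;> push_cast <;> ring
  · refine mem_conjSpan_int_iff.2 ⟨1, -2, ?_⟩
    ext <;> simp only [Prod.fst_sub, Prod.snd_sub] <;> push_cast <;> ring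
  · exact mem_conjSpan_int_iff.2 ⟨0, -1, by ext <;> simp⟩

lemma snd_sub_le_T3Lift_snd (hε' : ε' ≤ 1) : X.2 - ε' ≤ (T3Lift ε ε' l c X).2 := by
  unfold T3Lift conjT3
  split_ifs <;> linarith

lemma fst_iterate_T3Lift (k : ℕ) (X : ℝ × ℝ) :
    ((T3Lift ε ε' l c)^[k] X).1 = (T3 ε l c)^[k] X.1 :=
  Function.Semiconj.iterate_right (f := Prod.fst) (fun _ ↦ rfl) k X

lemma iterate_T3Lift_sub_mem_conjSpan (k : ℕ) :
    (T3Lift ε ε' l c)^[k] X - X ∈ conjSpan ℤ ε ε' := by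
  induction k with
  | zero => simp
  | succ k ih =>
    rw [Function.iterate_succ_apply', ← sub_add_sub_cancel _ ((T3Lift ε ε' l c)^[k] X)]
    exact add_mem T3Lift_sub_mem_conjSpan ih

lemma strictMono_snd_iterate_T3Lift (hε' : ε' < 0) (X : ℝ × ℝ) :
    StrictMono fun k ↦ ((T3Lift ε ε' l c)^[k] X).2 := by
  refine strictMono_nat_of_lt_succ fun k ↦ ?_
  rw [Function.iterate_succ_apply']
  linarith [snd_sub_le_T3Lift_snd (ε := ε) (l := l) (c := c) (X := (T3Lift ε ε' l c)^[k] X)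
    (hε'.le.trans zero_le_one)]

lemma conjT3_le_add_combination (hε₀₁ : ε ∈ Set.Ioo 0 1) (hε' : ε' ≤ 0) (hl : l ≤ 1)
    {x x' : ℝ} {m n : ℕ} (hmn : m ≠ 0 ∨ n ≠ 0)
    (hx : x + (m * (1 - ε) - n * ε) ∈ Set.Ico c (c + l)) :
    conjT3 ε ε' l c x x' ≤ x' + (m * (1 - ε') - n * ε') := by
  obtain ⟨hx₁, hx₂⟩ := hx
  have hm : x < c + ε → (1 : ℝ) ≤ m := by
    intro hlt
    norm_cast
    by_contra! hm
    obtain rfl : m = 0 := by omega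
    have hn : (1 : ℝ) ≤ n := by norm_cast; omega
    have := le_mul_of_one_le_left hε₀₁.1.le hn
    push_cast at hx₁
    linarith
  have hn : c + l - 1 + ε ≤ x → (1 : ℝ) ≤ n := by
    intro hle
    norm_cast
    by_contra! hn
    obtain rfl : n = 0 := by omega
    have hm : (1 : ℝ) ≤ m := by norm_cast; omega
    have := le_mul_of_one_le_left (sub_nonneg.2 hε₀₁.2.le) hm
    push_cast at hx₂
    linarith
  unfold conjT3
  split_ifs with hleft hmid
  · nlinarith [hm (by linarith), n.cast_nonneg (α := ℝ)]
  · nlinarith [hm hmid, hn (not_lt.1 hleft)]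
  · nlinarith [hn (not_lt.1 hleft), m.cast_nonneg (α := ℝ)]

lemma eq_or_T3Lift_snd_le (hε₀₁ : ε ∈ Set.Ioo 0 1) (hε' : ε' < 0) (hl : l ≤ 1)
    (hX : X.1 ∈ Set.Ico c (c + l)) (hY : Y.1 ∈ Set.Ico c (c + l))
    (hYX : Y - X ∈ conjSpan ℤ ε ε') (h : X.2 ≤ Y.2) :
    Y = X ∨ (T3Lift ε ε' l c X).2 ≤ Y.2 := by
  have hYX₁ : |(Y - X).1| < 1 := by
    rw [Prod.fst_sub, abs_lt]
    constructor <;> linarith [hX.1, hX.2, hY.1, hY.2]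
  obtain ⟨m, n, hmn⟩ :=
    exists_nat_combination_of_mem_conjSpan_int hε₀₁ hε' hYX hYX₁ (sub_nonneg.2 h)
  obtain rfl := sub_eq_iff_eq_add'.1 hmn
  by_cases hmn₀ : m ≠ 0 ∨ n ≠ 0
  · exact Or.inr (conjT3_le_add_combination hε₀₁ hε'.le hl hmn₀ hY)
  · obtain ⟨rfl, rfl⟩ : m = 0 ∧ n = 0 := by omega
    left
    simp

lemma T3Lift_snd_le_of_snd_lt (hε₀₁ : ε ∈ Set.Ioo 0 1) (hε' : ε' < 0) (hl : l ≤ 1)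
    (hX : X.1 ∈ Set.Ico c (c + l)) (hY : Y.1 ∈ Set.Ico c (c + l))
    (hYX : Y - X ∈ conjSpan ℤ ε ε') (h : X.2 < Y.2) : (T3Lift ε ε' l c X).2 ≤ Y.2 :=
  (eq_or_T3Lift_snd_le hε₀₁ hε' hl hX hY hYX h.le).resolve_left (by rintro rfl; exact h.false)

lemma exists_iterate_T3Lift_eq (hε' : ε' < 0) (hl₁ : max ε (1 - ε) < l) (hl₂ : l < 1)
    (hX : X.1 ∈ Set.Ico c (c + l)) (hY : Y.1 ∈ Set.Ico c (c + l))
    (hYX : Y - X ∈ conjSpan ℤ ε ε') (h : X.2 ≤ Y.2) :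
    ∃ k, (T3Lift ε ε' l c)^[k] X = Y := by
  obtain ⟨N, hN⟩ := exists_nat_gt ((Y.2 - X.2) / -ε')
  rw [div_lt_iff₀ (neg_pos.2 hε')] at hN
  induction N generalizing X with
  | zero =>
    rw [Nat.cast_zero, zero_mul] at hN
    linarith
  | succ N ih =>
    rcases eq_or_T3Lift_snd_le (mem_Ioo_of_max_lt hl₁ hl₂) hε' hl₂.le hX hY hYX h with rfl | hle
    · exact ⟨0, rfl⟩
    have hYTX : Y - T3Lift ε ε' l c X ∈ conjSpan ℤ ε ε' := by
      rw [← sub_sub_sub_cancel_right _ _ X]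
      exact sub_mem hYX T3Lift_sub_mem_conjSpan
    have hgap : Y.2 - (T3Lift ε ε' l c X).2 < N * -ε' := by
      push_cast at hN
      linarith [snd_sub_le_T3Lift_snd (ε := ε) (l := l) (c := c) (X := X)
        (hε'.le.trans zero_le_one)]
    obtain ⟨k, hk⟩ := ih (mapsTo_T3 hl₁ hl₂ hX) hYTX hle hgap
    exact ⟨k + 1, hk⟩

lemma isAncestor_iff_forall_notMem (hε : Irrational ε) (hε' : ε' < 0)
    (hl₁ : max ε (1 - ε) < l) (hl₂ : l < 1) {J : Set ℝ} (hJ : J ⊆ Set.Ico c (c + l))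
    (hX : X.1 ∈ J) (hY : Y.1 ∈ Set.Ico c (c + l)) (hYX : Y - X ∈ conjSpan ℤ ε ε') :
    IsAncestor ε l c J Y.1 X.1 ↔
      X.2 ≤ Y.2 ∧ ∀ Z, Z - X ∈ conjSpan ℤ ε ε' → X.2 < Z.2 → Z.2 ≤ Y.2 → Z.1 ∉ J := by
  have hmono := strictMono_snd_iterate_T3Lift (ε := ε) (l := l) (c := c) hε' X
  simp only [IsAncestor, ← fst_iterate_T3Lift (ε' := ε')]
  constructor
  · rintro ⟨-, k, hk, hnot⟩
    have hsub : (T3Lift ε ε' l c)^[k] X - Y ∈ conjSpan ℤ ε ε' := by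
      rw [← sub_sub_sub_cancel_right _ _ X]
      exact sub_mem (iterate_T3Lift_sub_mem_conjSpan k) hYX
    obtain rfl := eq_of_sub_mem_conjSpan_rat_of_fst_eq hε (mem_conjSpan_rat_of_int hsub) hk
    refine ⟨hmono.monotone k.zero_le, fun Z hZX hXZ hZY hZJ ↦ ?_⟩
    obtain ⟨j, rfl⟩ := exists_iterate_T3Lift_eq hε' hl₁ hl₂ (hJ hX) (hJ hZJ) hZX hXZ.le
    exact hnot j (hmono.lt_iff_lt.1 hXZ) (hmono.le_iff_le.1 hZY) hZJ
  · rintro ⟨hle, hnot⟩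
    obtain ⟨k, rfl⟩ := exists_iterate_T3Lift_eq hε' hl₁ hl₂ (hJ hX) hY hYX hle
    exact ⟨hX, k, rfl, fun j hj hjk ↦
      hnot _ (iterate_T3Lift_sub_mem_conjSpan j) (hmono hj) (hmono.monotone hjk)⟩

variable {Λ Λ' : ℝ}

lemma mul_mem_Ico_mul_iff {a b x y : ℝ} (ha : 0 < a) :
    a * b ∈ Set.Ico (a * x) (a * y) ↔ b ∈ Set.Ico x y := by
  simp only [Set.mem_Ico, mul_le_mul_iff_right₀ ha, mul_lt_mul_iff_right₀ ha]

lemma Ico_mul_subset (hΛ' : Λ' ∈ Set.Icc 0 1) (hc₁ : c ≤ 0) (hc₂ : 0 ≤ c + l) :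
    Set.Ico (Λ' * c) (Λ' * (c + l)) ⊆ Set.Ico c (c + l) :=
  Set.Ico_subset_Ico (le_mul_of_le_one_left hc₁ hΛ'.2) (mul_le_of_le_one_left hc₂ hΛ'.2)

lemma forall_notMem_Ico_mul_iff_T3Lift_snd_nonneg (hε' : ε' < 0)
    (hl₁ : max ε (1 - ε) < l) (hl₂ : l < 1) (hc₁ : c ≤ 0) (hc₂ : 0 ≤ c + l)
    (hΛΛ' : Λ * Λ' = 1) (hΛ' : Λ' ∈ Set.Ioo 0 1)
    (hΛL : ∀ D ∈ conjSpan ℤ ε ε', (Λ, Λ') * D ∈ conjSpan ℤ ε ε')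
    (hΛ'L : ∀ D ∈ conjSpan ℤ ε ε', (Λ', Λ) * D ∈ conjSpan ℤ ε ε')
    (hX : X.1 ∈ Set.Ico c (c + l)) (hXL : (Λ', Λ) * X - X ∈ conjSpan ℤ ε ε') :
    (∀ Z, Z - (Λ', Λ) * X ∈ conjSpan ℤ ε ε' → Λ * X.2 < Z.2 → Z.2 ≤ X.2 →
      Z.1 ∉ Set.Ico (Λ' * c) (Λ' * (c + l))) ↔ 0 ≤ (T3Lift ε ε' l c X).2 := by
  have hΛ : 1 < Λ := by nlinarith [hΛ'.1, hΛ'.2]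
  have hone : (Λ, Λ') * (Λ', Λ) = (1 : ℝ × ℝ) := by simp [hΛΛ', mul_comm Λ']
  have hnext {Y : ℝ × ℝ} := T3Lift_snd_le_of_snd_lt (Y := Y) (mem_Ioo_of_max_lt hl₁ hl₂)
    hε' hl₂.le hX
  have hlt : X.2 < (T3Lift ε ε' l c X).2 := strictMono_snd_iterate_T3Lift hε' X zero_lt_one
  constructor
  · intro hnot
    by_contra! hneg
    set W := (Λ', Λ) * T3Lift ε ε' l c X with hW
    have hWX : W - (Λ', Λ) * X ∈ conjSpan ℤ ε ε' := by
      rw [hW, ← mul_sub]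
      exact hΛ'L _ T3Lift_sub_mem_conjSpan
    have hWJ : W.1 ∈ Set.Ico (Λ' * c) (Λ' * (c + l)) :=
      (mul_mem_Ico_mul_iff hΛ'.1).2 (mapsTo_T3 hl₁ hl₂ hX)
    have hXW : X.2 < W.2 := by
      by_contra! hWX₂
      exact hnot W hWX (mul_lt_mul_of_pos_left hlt (zero_lt_one.trans hΛ)) hWX₂ hWJ
    have hle : (T3Lift ε ε' l c X).2 ≤ Λ * (T3Lift ε ε' l c X).2 :=
      hnext (Ico_mul_subset (Set.Ioo_subset_Icc_self hΛ') hc₁ hc₂ hWJ)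
        (by simpa using add_mem hWX hXL) hXW
    exact (mul_lt_of_one_lt_left hneg hΛ).not_ge hle
  · intro hnonneg Z hZX hXZ hZX₂ hZJ
    have hWX : (Λ, Λ') * Z - X ∈ conjSpan ℤ ε ε' := by
      simpa [mul_sub, ← mul_assoc, hone] using hΛL _ hZX
    have hWI : Λ * Z.1 ∈ Set.Ico c (c + l) := by
      rw [← mul_mem_Ico_mul_iff hΛ'.1, ← mul_assoc, mul_comm Λ' Λ, hΛΛ', one_mul]
      exact hZJ
    have hXW : X.2 < Λ' * Z.2 := by nlinarith [hΛ'.1]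
    have hle : (T3Lift ε ε' l c X).2 ≤ Λ' * Z.2 := hnext hWI hWX hXW
    have hZ₂ : 0 ≤ Z.2 := nonneg_of_mul_nonneg_right (hnonneg.trans hle) hΛ'.1
    exact (hlt.trans_le (hle.trans ((mul_le_of_le_one_left hZ₂ hΛ'.2.le).trans hZX₂))).false

theorem isAncestor_mul_iff_T3Lift_snd_nonneg (hε : Irrational ε) (hε' : ε' < 0)
    (hl₁ : max ε (1 - ε) < l) (hl₂ : l < 1) (hc₁ : c ≤ 0) (hc₂ : 0 ≤ c + l)
    (hΛΛ' : Λ * Λ' = 1) (hΛ' : Λ' ∈ Set.Ioo 0 1)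
    (hΛL : ∀ D ∈ conjSpan ℤ ε ε', (Λ, Λ') * D ∈ conjSpan ℤ ε ε')
    (hΛ'L : ∀ D ∈ conjSpan ℤ ε ε', (Λ', Λ) * D ∈ conjSpan ℤ ε ε')
    (hX : X.1 ∈ Set.Ico c (c + l)) (hXL : (Λ', Λ) * X - X ∈ conjSpan ℤ ε ε') :
    IsAncestor ε l c (Set.Ico (Λ' * c) (Λ' * (c + l))) X.1 (Λ' * X.1) ↔
      X.2 ≤ 0 ∧ 0 ≤ (T3Lift ε ε' l c X).2 := by
  have hΛ : 1 < Λ := by nlinarith [hΛ'.1, hΛ'.2]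
  rw [← forall_notMem_Ico_mul_iff_T3Lift_snd_nonneg hε' hl₁ hl₂ hc₁ hc₂ hΛΛ' hΛ' hΛL hΛ'L hX hXL]
  refine (isAncestor_iff_forall_notMem (X := (Λ', Λ) * X) hε hε' hl₁ hl₂
    (Ico_mul_subset (Set.Ioo_subset_Icc_self hΛ') hc₁ hc₂) ((mul_mem_Ico_mul_iff hΛ'.1).2 hX) hX
    (by simpa using neg_mem hXL)).trans (and_congr_left' ?_)
  change Λ * X.2 ≤ X.2 ↔ X.2 ≤ 0
  constructor <;> intro h <;> nlinarith

lemma mul_sub_mem_Zbr_of_image_coset_subset {q : ℕ} (hq : q ≠ 0) {a z : ℝ}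
    (hclasses : ∀ i j : ℤ,
      (fun x ↦ a * x) '' {x | ∃ w ∈ Zbr ε, x = ((i : ℝ) + (j : ℝ) * ε) / (q : ℝ) + w} ⊆
        {x | ∃ w ∈ Zbr ε, x = ((i : ℝ) + (j : ℝ) * ε) / (q : ℝ) + w})
    (hz : (q : ℝ) * z ∈ Zbr ε) : a * z - z ∈ Zbr ε := by
  obtain ⟨i, j, hij⟩ := hz
  have hz : z = (i + j * ε) / q := by rw [← hij, mul_div_cancel_left₀ z (Nat.cast_ne_zero.2 hq)]
  obtain ⟨w, hw, h⟩ := hclasses i j ⟨z, ⟨0, ⟨0, 0, by simp⟩, by rw [hz, add_zero]⟩, rfl⟩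
  rwa [sub_eq_of_eq_add' (h.trans (by rw [hz]))]

theorem ancestor_iff_conjugate_nonpos_general {z z' : ℝ} {A B C : ℤ} (hA : A ≠ 0)
    (hε : Irrational ε) (hquad : (A : ℝ) * ε ^ 2 + (B : ℝ) * ε + (C : ℝ) = 0)
    (hε' : ε' = -(B : ℝ) / (A : ℝ) - ε) (hconj : ε' < 0)
    (hl₁ : max ε (1 - ε) < l) (hl₂ : l < 1) (hc₁ : c ≤ 0) (hc₂ : 0 ≤ c + l)
    (hΛ : (Λ, Λ') ∈ conjSpan ℚ ε ε') (hΛΛ' : Λ * Λ' = 1) (hΛ' : Λ' ∈ Set.Ioo 0 1)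
    (hZ : (fun x ↦ Λ * x) '' Zbr ε = Zbr ε)
    (hz : (z, z') ∈ conjSpan ℚ ε ε') (hzZ : Λ' * z - z ∈ Zbr ε) (hzI : z ∈ Set.Ico c (c + l)) :
    IsAncestor ε l c (Set.Ico (Λ' * c) (Λ' * (c + l))) z (Λ' * z) ↔
      z' ≤ 0 ∧ 0 ≤ conjT3 ε ε' l c z z' := by
  have hA' : (A : ℝ) ≠ 0 := Int.cast_ne_zero.2 hA
  have hadd : ε + ε' = ((-B / A : ℚ) : ℝ) := by push_cast; rw [hε']; ring
  have hmul : ε * ε' = ((C / A : ℚ) : ℝ) := by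
    push_cast
    rw [hε']
    field_simp
    linarith
  have hΛZ : Set.MapsTo (Λ * ·) (Zbr ε) (Zbr ε) := Set.mapsTo_iff_image_subset.2 hZ.subset
  have hΛ'Z : Set.MapsTo (Λ' * ·) (Zbr ε) (Zbr ε) := by
    intro x hx
    obtain ⟨y, hy, rfl⟩ := hZ.superset hx
    change Λ' * (Λ * y) ∈ Zbr ε
    rwa [← mul_assoc, mul_comm Λ', hΛΛ', one_mul]
  have hswap : (Λ', Λ) ∈ conjSpan ℚ ε ε' := swap_mem_conjSpan_rat hadd hΛ
  exact isAncestor_mul_iff_T3Lift_snd_nonneg (X := (z, z')) hε hconj hl₁ hl₂ hc₁ hc₂ hΛΛ' hΛ'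
    (fun _ ↦ mul_mem_conjSpan_int hε hadd hmul hΛ hΛZ)
    (fun _ ↦ mul_mem_conjSpan_int hε hadd hmul hswap hΛ'Z) hzI
    (mem_conjSpan_int_of_fst_mem_Zbr hε (sub_mem (mul_mem_conjSpan_rat hadd hmul hswap hz) hz) hzZ)

end

theorem ancestor_iff_conjugate_nonpos (ε : ℝ) (A B C : ℤ) (hA : A ≠ 0)
    (hε : Irrational ε) (hεm : ε ∈ Set.Ioo (0 : ℝ) 1)
    (hquad : (A : ℝ) * ε ^ 2 + (B : ℝ) * ε + (C : ℝ) = 0)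
    (hconj : -(B : ℝ) / (A : ℝ) - ε < 0)
    (q : ℕ) (hq : 1 ≤ q) (l c : ℝ)
    (hl₁ : max ε (1 - ε) < l) (hl₂ : l < 1) (hc₁ : c ≤ 0) (hc₂ : 0 < c + l)
    (hlq : (q : ℝ) * l ∈ Zbr ε) (hcq : (q : ℝ) * c ∈ Zbr ε)
    (p r : ℚ)
    (hunit : ((p : ℝ) + (r : ℝ) * ε) * ((p : ℝ) + (r : ℝ) * (-(B : ℝ) / (A : ℝ) - ε)) = 1 ∨
             ((p : ℝ) + (r : ℝ) * ε) * ((p : ℝ) + (r : ℝ) * (-(B : ℝ) / (A : ℝ) - ε)) = -1)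
    (hsum : ∃ m : ℤ, ((p : ℝ) + (r : ℝ) * ε) + ((p : ℝ) + (r : ℝ) * (-(B : ℝ) / (A : ℝ) - ε))
      = (m : ℝ))
    (hΛ : 1 < (p : ℝ) + (r : ℝ) * ε)
    (hΛ' : (p : ℝ) + (r : ℝ) * (-(B : ℝ) / (A : ℝ) - ε) ∈ Set.Ioo (0 : ℝ) 1)
    (hZ : (fun z => ((p : ℝ) + (r : ℝ) * ε) * z) '' Zbr ε = Zbr ε)
    (hclasses : ∀ i j : ℤ,
      (fun x => ((p : ℝ) + (r : ℝ) * (-(B : ℝ) / (A : ℝ) - ε)) * x) ''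
          {x | ∃ w ∈ Zbr ε, x = ((i : ℝ) + (j : ℝ) * ε) / (q : ℝ) + w}
        = {x | ∃ w ∈ Zbr ε, x = ((i : ℝ) + (j : ℝ) * ε) / (q : ℝ) + w}) :
    ∀ z₀ : ℝ, ∀ s t : ℚ, z₀ = (s : ℝ) + (t : ℝ) * ε → (q : ℝ) * z₀ ∈ Zbr ε →
      z₀ ∈ Set.Ico c (c + l) →
      (IsAncestor ε l c
          (Set.Ico (((p : ℝ) + (r : ℝ) * (-(B : ℝ) / (A : ℝ) - ε)) * c)
            (((p : ℝ) + (r : ℝ) * (-(B : ℝ) / (A : ℝ) - ε)) * (c + l)))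
          z₀ (((p : ℝ) + (r : ℝ) * (-(B : ℝ) / (A : ℝ) - ε)) * z₀) ↔
        ((s : ℝ) + (t : ℝ) * (-(B : ℝ) / (A : ℝ) - ε) ≤ 0 ∧
          0 ≤ (if z₀ < c + l - 1 + ε then
                 (s : ℝ) + (t : ℝ) * (-(B : ℝ) / (A : ℝ) - ε) + 1 - (-(B : ℝ) / (A : ℝ) - ε)
               else if z₀ < c + ε then
                 (s : ℝ) + (t : ℝ) * (-(B : ℝ) / (A : ℝ) - ε) + 1
                   - 2 * (-(B : ℝ) / (A : ℝ) - ε)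
               else
                 (s : ℝ) + (t : ℝ) * (-(B : ℝ) / (A : ℝ) - ε)
                   - (-(B : ℝ) / (A : ℝ) - ε)))) := by
  intro z₀ s t hz hqz hzI
  have hnorm := hunit.resolve_right fun h ↦ by
    linarith [mul_pos (zero_lt_one.trans hΛ) hΛ'.1]
  exact ancestor_iff_conjugate_nonpos_general hA hε hquad rfl hconj hl₁ hl₂ hc₁ hc₂.le
    (mem_conjSpan_rat_iff.2 ⟨p, r, rfl⟩) hnorm hΛ' hZ (mem_conjSpan_rat_iff.2 ⟨s, t, by rw [hz]⟩)
    (mul_sub_mem_Zbr_of_image_coset_subset (by omega) (fun i j ↦ (hclasses i j).subset) hqz) hzI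
end
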